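/- Fix integers m ≥ 2, s ≥ 4, d ≥ 2s+2 and b with 2 ≤ b ≤ s. Fix a line L ⊂ ℙ^m, a connected zero-dimensional subscheme Z' ⊂ L with deg(Z') = b, and a finite set E ⊂ ℙ^m ∖ L with #E = s−b. Let O ∈ ⟨ν_d(Z' ∪ E)⟩ be any point such that O ∉ ⟨ν_d(F)⟩ for every closed subscheme F ⊊ Z' ∪ E (such O exists since Z' ∪ E is curvilinear). Then br(O) = s and sr(O) = (d+2−b) + (s−b); moreover, if A' ⊂ L evinces the symmetric rank of the point Q := ⟨{O} ∪ ν_d(E)⟩ ∩ ⟨ν_d(L)⟩ with respect to the rational normal curve ν_d(L), then A' ∪ E evinces sr(O). -/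

import Mathlib

open scoped LinearAlgebra.Projectivization

noncomputable section

/-- The polynomial ring in `m+1` variables over `K`: homogeneous coordinate ring of `ℙ^m`. -/
abbrev PR (K : Type) [Field K] (m : ℕ) : Type := MvPolynomial (Fin (m+1)) K

/-- The space of degree-`d` forms in `m+1` variables. -/
abbrev Hd (K : Type) [Field K] (m d : ℕ) : Submodule K (PR K m) :=
  MvPolynomial.homogeneousSubmodule (Fin (m+1)) K d

/-- Projective `m`-space over `K`. -/
abbrev Pm (K : Type) [Field K] (m : ℕ) := ℙ K (Fin (m+1) → K)

/-- The target projective space `ℙ^n`, `n = C(m+d,m) - 1`, of the degree-`d` Veronese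
embedding, realized as the projectivization of the dual of the space of degree-`d` forms
(the space of degree-`d` symmetric tensors). -/
abbrev PN (K : Type) [Field K] (m d : ℕ) := ℙ K (Module.Dual K (Hd K m d))

variable {K : Type} [Field K] {m : ℕ}

/-- Hilbert function of `R/I` in degree `t`. -/
def hilbQ (I : Ideal (PR K m)) (t : ℕ) : ℕ :=
  Module.finrank K ((Hd K m t).map (Ideal.Quotient.mkₐ K I).toLinearMap)

/-- The degree (length) of the projective scheme defined by `I`: the eventual value of the
Hilbert function of `R/I`. -/
def idealDeg (I : Ideal (PR K m)) : ℕ := Filter.limsup (fun t => hilbQ I t) Filter.atTop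

/-- `h^1(𝓘_Z(d))` for the zero-dimensional scheme `Z` with (saturated) ideal `I`:
it equals `deg Z - dim (R/I)_d`. -/
def h1I (I : Ideal (PR K m)) (d : ℕ) : ℕ := idealDeg I - hilbQ I d

/-- An ideal is homogeneous. -/
def IsHomogI (I : Ideal (PR K m)) : Prop :=
  ∀ f ∈ I, ∀ n : ℕ, MvPolynomial.homogeneousComponent n f ∈ I

/-- An ideal is saturated with respect to the irrelevant maximal ideal. -/
def IsSatI (I : Ideal (PR K m)) : Prop :=
  ∀ f : PR K m, (∀ i, MvPolynomial.X i * f ∈ I) → f ∈ I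

/-- A closed subscheme of `ℙ^m`, given by its saturated homogeneous ideal. -/
structure PSub (K : Type) [Field K] (m : ℕ) where
  I : Ideal (PR K m)
  homog : IsHomogI I
  sat : IsSatI I

/-- A (closed sub)scheme is zero-dimensional iff the Hilbert function of `R/I` is bounded. -/
def IsZeroDimI (I : Ideal (PR K m)) : Prop := ∃ C, ∀ t, hilbQ I t ≤ C

/-- A polynomial vanishes at a projective point (every homogeneous component vanishes
at a representative). -/
def vanishesAt (f : PR K m) (a : Pm K m) : Prop :=
  ∀ n : ℕ, MvPolynomial.eval a.rep (MvPolynomial.homogeneousComponent n f) = 0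

/-- Zero locus of an ideal in `ℙ^m`. -/
def pzeroLocus (I : Ideal (PR K m)) : Set (Pm K m) := {a | ∀ f ∈ I, vanishesAt f a}

/-- The (saturated) homogeneous ideal of a set of points of `ℙ^m`. -/
def idealOfSet (S : Set (Pm K m)) : Ideal (PR K m) :=
  Ideal.span {f : PR K m | (∃ n, f.IsHomogeneous n) ∧ ∀ a ∈ S, MvPolynomial.eval a.rep f = 0}

/-- Saturation of a homogeneous ideal: the smallest saturated homogeneous ideal containing it. -/
def satIdeal (J : Ideal (PR K m)) : Ideal (PR K m) := sInf {J' | J ≤ J' ∧ IsHomogI J' ∧ IsSatI J'}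

/-- The scheme defined by the (saturated) ideal `I` is reduced. -/
def IsReducedI (I : Ideal (PR K m)) : Prop := I = idealOfSet (pzeroLocus I)

/-- Connected component of a zero-dimensional scheme at a point `a`: the largest subscheme
supported at `a`, i.e. the `a`-primary component. -/
def componentAt (I : Ideal (PR K m)) (a : Pm K m) : Ideal (PR K m) :=
  sInf {J | I ≤ J ∧ IsHomogI J ∧ IsSatI J ∧ pzeroLocus J ⊆ {a}}

/-- Residual scheme of `Z` with respect to the hypersurface `f = 0`: the colon ideal `(I_Z : f)`. -/
def resIdeal (I : Ideal (PR K m)) (f : PR K m) : Ideal (PR K m) :=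
  Submodule.colon I (Ideal.span {f})

/-- Degree of the scheme-theoretic intersection of the subschemes defined by `I` and `J`. -/
def interDeg (I J : Ideal (PR K m)) : ℕ := idealDeg (I ⊔ J)

/-- The degree-`d` Veronese image of a vector `v`: the evaluation-at-`v` functional on
degree-`d` forms. -/
def nu (d : ℕ) (v : Fin (m+1) → K) : Module.Dual K (Hd K m d) :=
  (MvPolynomial.aeval v).toLinearMap ∘ₗ (Hd K m d).subtype

/-- The linear span of the Veronese image `ν_d(S)` of a set `S` of points of `ℙ^m`. -/
def dualSpan (d : ℕ) (S : Set (Pm K m)) : Submodule K (Module.Dual K (Hd K m d)) :=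
  Submodule.span K ((fun a => nu d a.rep) '' S)

/-- The linear span `⟨ν_d(Z)⟩` of the Veronese image of the subscheme with ideal `I`:
the annihilator of the degree-`d` part of `I`. -/
def schemeSpanSub (I : Ideal (PR K m)) (d : ℕ) : Submodule K (Module.Dual K (Hd K m d)) where
  carrier := {φ | ∀ f : Hd K m d, (f : PR K m) ∈ I → φ f = 0}
  add_mem' := by
    intro a b ha hb f hf
    simp [LinearMap.add_apply, ha f hf, hb f hf]
  zero_mem' := by intro f hf; simp
  smul_mem' := by
    intro c a ha f hf
    simp [LinearMap.smul_apply, ha f hf]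

/-- `P ∈ ⟨ν_d(Z)⟩`, for `Z` the subscheme with ideal `I`. -/
def inSpanI (I : Ideal (PR K m)) (d : ℕ) (P : PN K m d) : Prop := P.rep ∈ schemeSpanSub I d

/-- `P ∈ ⟨ν_d(S)⟩` for a set `S` of points of `ℙ^m`. -/
def inSpanSet (d : ℕ) (S : Set (Pm K m)) (P : PN K m d) : Prop := P.rep ∈ dualSpan d S

/-- `L` is a linear subspace of `ℙ^m`. -/
def IsLinearSub (L : Set (Pm K m)) : Prop :=
  ∃ W : Submodule K (Fin (m+1) → K), L = {a | a.submodule ≤ W}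

/-- `L` is a line of `ℙ^m`. -/
def IsLine (L : Set (Pm K m)) : Prop :=
  ∃ W : Submodule K (Fin (m+1) → K), Module.finrank K W = 2 ∧ L = {a | a.submodule ≤ W}

/-- `L` is a plane of `ℙ^m`. -/
def IsPlane (L : Set (Pm K m)) : Prop :=
  ∃ W : Submodule K (Fin (m+1) → K), Module.finrank K W = 3 ∧ L = {a | a.submodule ≤ W}

/-- `J` is the (saturated homogeneous) ideal of a conic of `ℙ^m`: a degree-2 curve contained
in a plane (possibly reducible). -/
def IsConic (J : Ideal (PR K m)) : Prop :=
  ∃ (W : Submodule K (Fin (m+1) → K)) (q : PR K m),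
    Module.finrank K W = 3 ∧ q.IsHomogeneous 2 ∧
    q ∉ idealOfSet {a : Pm K m | a.submodule ≤ W} ∧
    J = satIdeal (idealOfSet {a : Pm K m | a.submodule ≤ W} ⊔ Ideal.span {q})

/-- The algebra of polynomial functions on a `K`-vector space. -/
def polyFunctions (K V : Type) [Field K] [AddCommGroup V] [Module K V] : Subalgebra K (V → K) :=
  Algebra.adjoin K {g : V → K | ∃ φ : V →ₗ[K] K, g = ⇑φ}

/-- Zariski closure of a subset of a projective space. -/
def zClosure {V : Type} [AddCommGroup V] [Module K V] (T : Set (ℙ K V)) : Set (ℙ K V) :=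
  {P | ∀ F ∈ polyFunctions K V, (∀ Q ∈ T, ∀ c : K, F (c • Q.rep) = 0) →
    ∀ c : K, F (c • P.rep) = 0}

/-- The Veronese variety `X_{m,d} = ν_d(ℙ^m)` as a subset of `PN K m d`. -/
def XSet (K : Type) [Field K] (m d : ℕ) : Set (PN K m d) :=
  {Q | ∃ a : Pm K m, Q.submodule = Submodule.span K {nu d a.rep}}

/-- The image `ν_d(S)` of a set of points of `ℙ^m`, as a subset of `PN K m d`. -/
def nuSet (d : ℕ) (S : Set (Pm K m)) : Set (PN K m d) :=
  {Q | ∃ a ∈ S, Q.submodule = Submodule.span K {nu d a.rep}}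

/-- The rank of a point `P` of `PN` with respect to a subset `Y ⊆ PN`. -/
def rankWrt {m d : ℕ} (Y : Set (PN K m d)) (P : PN K m d) : ℕ :=
  sInf {r | ∃ S : Finset (PN K m d), ↑S ⊆ Y ∧ S.card = r ∧
    P.rep ∈ Submodule.span K (Projectivization.rep '' (S : Set (PN K m d)))}

/-- The `s`-th secant variety of `Y ⊆ PN`: the Zariski closure of the union of the spans
of `s` points of `Y`. -/
def secantWrt {m d : ℕ} (Y : Set (PN K m d)) (s : ℕ) : Set (PN K m d) :=
  zClosure {Q | ∃ S : Finset (PN K m d), ↑S ⊆ Y ∧ S.card ≤ s ∧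
    Q.rep ∈ Submodule.span K (Projectivization.rep '' (S : Set (PN K m d)))}

/-- The border rank of `P` with respect to `Y ⊆ PN`. -/
def brankWrt {m d : ℕ} (Y : Set (PN K m d)) (P : PN K m d) : ℕ :=
  sInf {s | 0 < s ∧ P ∈ secantWrt Y s}

/-- Symmetric rank. -/
def srank {m : ℕ} (d : ℕ) (P : PN K m d) : ℕ := rankWrt (XSet K m d) P

/-- Border rank. -/
def brank {m : ℕ} (d : ℕ) (P : PN K m d) : ℕ := brankWrt (XSet K m d) P

/-- Cactus rank: minimal degree of a zero-dimensional closed subscheme `E ⊂ ℙ^m` with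
`P ∈ ⟨ν_d(E)⟩`. -/
def crank {m : ℕ} (d : ℕ) (P : PN K m d) : ℕ :=
  sInf {c | ∃ Z : PSub K m, IsZeroDimI Z.I ∧ idealDeg Z.I = c ∧ inSpanI Z.I d P}

/-- `σ_{s,r}(X_{m,d})`. -/
def sigmaSet (K : Type) [Field K] (m d s r : ℕ) : Set (PN K m d) :=
  {P | brank d P = s ∧ srank d P = r}

/-- A property `Φ` holds for a general `k`-tuple of points of the linear subspace of `ℙ^m`
determined by `W`. -/
def GenerallyOn (W : Submodule K (Fin (m+1) → K)) (k : ℕ)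
    (Φ : (Fin k → Pm K m) → Prop) : Prop :=
  ∃ w : Fin 3 → W, Submodule.span K (Set.range fun j => (w j : Fin (m+1) → K)) = W ∧
    ∃ F : MvPolynomial (Fin k × Fin 3) K, F ≠ 0 ∧
      ∀ c : Fin k → Fin 3 → K,
        MvPolynomial.eval (fun p => c p.1 p.2) F ≠ 0 →
        ∀ e : Fin k → Pm K m,
          (∀ i, (e i).submodule = Submodule.span K {∑ j, c i j • (w j : Fin (m+1) → K)}) → Φ e

end

/-
On the line `τ ↦ u + τ v`, with `u` the support of `Z'`, the scheme `Z'` is the jet of order `b`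
at `u`. By minimality `O` is a functional `f ↦ ℓ (f (u + τ v))`, where `ℓ` depends on the
derivatives at `τ = 0` up to order exactly `b - 1`, plus a combination of the points of `ν_d(E)`
with nonzero coefficients.

Border rank: replacing the jet by divided differences at `b` nearby points exhibits `O` as a
limit of points of rank at most `s`. Conversely a catalecticant of `O` has a nonzero minor of
size `s`: forms that are powers of `τ` on the line and vanish on `E`, together with forms that
vanish on the line and separate the points of `E`, make it an antitriangular block plus a
diagonal one.

Rank: by Sylvester `ℓ` is a combination of the evaluations at the roots of a separable
polynomial of degree `d + 2 - b` apolar to it. Conversely, subtracting the combination over `E`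
from a short decomposition of `O` leaves a decomposition of the jet. Its part off the line,
multiplied by a form vanishing on the line, becomes a relation among few points of
`ν_(d-1)(ℙ^m)`, whose support is thus collinear; it is empty, since a linear form vanishing on
it but not on the line would leave too few points to decompose what remains of the jet. So the
decomposition of `O` consists of `E` and of a decomposition of the jet on the line, which takes
`d + 2 - b` points. The point `Q` is a multiple of the jet because at most `d` points of
`ν_(d-1)(ℙ^m)` are independent.
-/

section Forms

open MvPolynomial

variable {K : Type} [Field K] {m : ℕ}

theorem eval_smul_of_isHomogeneous {σ R : Type*} [CommSemiring R] {f : MvPolynomial σ R} {t : ℕ}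
    (hf : f.IsHomogeneous t) (c : R) (p : σ → R) : eval (c • p) f = c ^ t * eval p f := by
  simp only [eval_eq, Finset.mul_sum]
  refine Finset.sum_congr rfl fun e he => ?_
  simp only [Pi.smul_apply, smul_eq_mul, mul_pow, Finset.prod_mul_distrib,
    Finset.prod_pow_eq_pow_sum, ← hf.degree_eq_sum_deg_support he]
  ring

theorem exists_linearForm_eval_eq (ξ : Module.Dual K (Fin (m + 1) → K)) :
    ∃ l : PR K m, l.IsHomogeneous 1 ∧ ∀ p, eval p l = ξ p := by
  refine ⟨∑ i, C (ξ (Pi.single i 1)) * X i,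
    IsHomogeneous.sum _ _ _ fun i _ => isHomogeneous_C_mul_X _ _, fun p => ?_⟩
  conv_rhs => rw [pi_eq_sum_univ' p, map_sum]
  simp [mul_comm]

theorem exists_linearForm_vanishing_on [Infinite K] {ι : Type*} [Finite ι]
    (W : Submodule K (Fin (m + 1) → K)) (v : ι → Fin (m + 1) → K) (hv : ∀ i, v i ∉ W) :
    ∃ l : PR K m, l.IsHomogeneous 1 ∧ (∀ w ∈ W, eval w l = 0) ∧ ∀ i, eval (v i) l ≠ 0 := by
  obtain ⟨ξ, hξ⟩ := Module.exists_dual_forall_apply_ne_zero (K := K) (fun i => W.mkQ (v i))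
    fun i => by simpa using hv i
  obtain ⟨l, hl, hlξ⟩ := exists_linearForm_eval_eq (ξ ∘ₗ W.mkQ)
  refine ⟨l, hl, fun w hw => ?_, fun i => (hlξ (v i)).symm ▸ hξ i⟩
  rw [hlξ, LinearMap.comp_apply, Submodule.mkQ_apply, (Submodule.Quotient.mk_eq_zero W).2 hw,
    map_zero]

theorem rep_mem_span_singleton_iff {p q : Pm K m} : q.rep ∈ Submodule.span K {p.rep} ↔ q = p := by
  constructor
  · intro hq
    rw [← p.mk_rep, ← q.mk_rep, Projectivization.mk_eq_mk_iff']
    exact Submodule.mem_span_singleton.1 hq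
  · rintro rfl
    exact Submodule.mem_span_singleton_self _

theorem exists_form_separating [Infinite K] {B : Finset (Pm K m)} {q : Pm K m} (hq : q ∉ B)
    {t : ℕ} (ht : B.card ≤ t) :
    ∃ f : PR K m, f.IsHomogeneous t ∧ (∀ p ∈ B, eval p.rep f = 0) ∧ eval q.rep f ≠ 0 := by
  have hsep (p : B) : q.rep ∉ Submodule.span K {p.1.rep} := fun h =>
    hq (rep_mem_span_singleton_iff.1 h ▸ p.2)
  choose l hl hlp hlq using fun p : B =>
    exists_linearForm_vanishing_on _ (fun _ : Unit => q.rep) fun _ => hsep p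
  obtain ⟨l₀, hl₀, -, hl₀q⟩ := exists_linearForm_vanishing_on ⊥ (fun _ : Unit => q.rep)
    fun _ => by simpa using q.rep_nonzero
  obtain ⟨k, rfl⟩ := Nat.exists_eq_add_of_le ht
  refine ⟨(∏ p, l p) * l₀ ^ k, ?_, fun p hp => ?_, ?_⟩
  · simpa using (IsHomogeneous.prod Finset.univ l _ fun p _ => hl p).mul (hl₀.pow k)
  · have hpl : eval p.rep (l ⟨p, hp⟩) = 0 := hlp ⟨p, hp⟩ _ (Submodule.mem_span_singleton_self _)
    simp only [map_mul, map_prod]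
    exact mul_eq_zero_of_left (Finset.prod_eq_zero (Finset.mem_univ ⟨p, hp⟩) hpl) _
  · simp only [map_mul, map_prod, map_pow]
    exact mul_ne_zero (Finset.prod_ne_zero_iff.2 fun p _ => hlq p ()) (pow_ne_zero _ (hl₀q ()))

end Forms

section Relations

open MvPolynomial
open scoped Pointwise

variable {K : Type} [Field K] {m : ℕ}

/-- The linear combination `∑ c(p) ν_d(p)` of points of the Veronese variety. -/
noncomputable def nuSum (d : ℕ) : (Pm K m →₀ K) →ₗ[K] Module.Dual K (Hd K m d) :=
  Finsupp.linearCombination K fun p => nu d p.rep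

theorem nu_apply (d : ℕ) (p : Fin (m + 1) → K) (f : Hd K m d) : nu d p f = eval p (f : PR K m) := by
  simp [nu, aeval_eq_eval]

theorem nuSum_apply (d : ℕ) (c : Pm K m →₀ K) (f : Hd K m d) :
    nuSum d c f = ∑ p ∈ c.support, c p * eval p.rep (f : PR K m) := by
  simp [nuSum, Finsupp.linearCombination_apply, Finsupp.sum, nu_apply]

theorem mem_dualSpan_iff {d : ℕ} {S : Set (Pm K m)} {φ : Module.Dual K (Hd K m d)} :
    φ ∈ dualSpan d S ↔ ∃ c : Pm K m →₀ K, ↑c.support ⊆ S ∧ nuSum d c = φ :=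
  Finsupp.mem_span_image_iff_linearCombination K

theorem dualSpan_union (d : ℕ) (S T : Set (Pm K m)) :
    dualSpan d (S ∪ T) = dualSpan d S ⊔ dualSpan d T := by
  rw [dualSpan, Set.image_union, Submodule.span_union]
  rfl

theorem nuSum_mem_dualSpan (d : ℕ) (c : Pm K m →₀ K) : nuSum d c ∈ dualSpan d ↑c.support :=
  mem_dualSpan_iff.2 ⟨c, subset_rfl, rfl⟩

theorem nuSum_eval_smul {d e : ℕ} (c : Pm K m →₀ K) {l f : PR K m} (hl : l.IsHomogeneous e)
    (hf : f.IsHomogeneous d) :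
    nuSum d ((fun p : Pm K m => eval p.rep l) • c) ⟨f, hf⟩ =
      nuSum (d + e) c ⟨f * l, hf.mul hl⟩ := by
  simp only [nuSum_apply, map_mul]
  classical
  refine Finset.sum_subset_zero_on_sdiff (fun p hp => ?_) (fun p hp => ?_) fun p _ => ?_
  · simp_all
  · simp only [Finset.mem_sdiff, Finsupp.mem_support_iff, Finsupp.coe_pointwise_smul,
      Pi.smul_apply', smul_eq_mul, mul_ne_zero_iff, not_and_not_right] at hp
    by_cases hlp : eval p.rep l = 0
    · rw [hlp, mul_zero, mul_zero]
    · exact absurd (hp.2 hlp) hp.1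
  · simp only [Finsupp.coe_pointwise_smul, Pi.smul_apply', smul_eq_mul]
    ring

theorem add_two_le_card_of_nuSum_eq_zero [Infinite K] {t : ℕ} {c : Pm K m →₀ K} (hc : c ≠ 0)
    (h : nuSum t c = 0) : t + 2 ≤ c.support.card := by
  classical
  by_contra! hlt
  obtain ⟨q, hq⟩ := Finsupp.support_nonempty_iff.2 hc
  obtain ⟨f, hf, hfB, hfq⟩ := exists_form_separating (Finset.notMem_erase q c.support)
    (show _ ≤ t by rw [Finset.card_erase_of_mem hq]; omega)
  have hsum : nuSum t c ⟨f, hf⟩ = c q * eval q.rep f := by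
    rw [nuSum_apply]
    exact Finset.sum_eq_single_of_mem q hq fun p hp hpq => by
      rw [hfB p (Finset.mem_erase.2 ⟨hpq, hp⟩), mul_zero]
  rw [h] at hsum
  exact mul_ne_zero (Finsupp.mem_support_iff.1 hq) hfq hsum.symm

open scoped Classical in
theorem exists_nuSum_eq_zero_support_filter [Infinite K] {t : ℕ} (c : Pm K m →₀ K)
    (D : Submodule K (Fin (m + 1) → K))
    (h : ∀ f : Hd K m (t + 1), (∀ w ∈ D, eval w (f : PR K m) = 0) → nuSum (t + 1) c f = 0) :
    ∃ c' : Pm K m →₀ K, c'.support = {p ∈ c.support | p.rep ∉ D} ∧ nuSum t c' = 0 := by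
  obtain ⟨l, hl, hlD, hlc⟩ := exists_linearForm_vanishing_on D
    (fun p : {p ∈ c.support | p.rep ∉ D} => p.1.rep) fun p => (Finset.mem_filter.1 p.2).2
  refine ⟨(fun p : Pm K m => eval p.rep l) • c, ?_, LinearMap.ext fun ⟨f, hf⟩ => ?_⟩
  · ext p
    simp only [Finsupp.mem_support_iff, Finsupp.coe_pointwise_smul, Pi.smul_apply', smul_eq_mul,
      mul_ne_zero_iff, Finset.mem_filter]
    exact ⟨fun ⟨h₁, h₂⟩ => ⟨h₂, fun hp => h₁ (hlD _ hp)⟩, fun ⟨h₁, h₂⟩ =>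
      ⟨hlc ⟨p, Finset.mem_filter.2 ⟨Finsupp.mem_support_iff.2 h₁, h₂⟩⟩, h₁⟩⟩
  · rw [nuSum_eval_smul c hl hf]
    exact h _ fun w hw => by rw [map_mul, hlD w hw, mul_zero]

open scoped Classical in
theorem rep_mem_of_card_filter_le [Infinite K] {t : ℕ} {c : Pm K m →₀ K}
    {D : Submodule K (Fin (m + 1) → K)}
    (h : ∀ f : Hd K m (t + 1), (∀ w ∈ D, eval w (f : PR K m) = 0) → nuSum (t + 1) c f = 0)
    (hcard : {p ∈ c.support | p.rep ∉ D}.card ≤ t + 1) : ∀ p ∈ c.support, p.rep ∈ D := by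
  obtain ⟨c', hc', hrel⟩ := exists_nuSum_eq_zero_support_filter c D h
  have hzero : c' = 0 := by
    by_contra hne
    have := add_two_le_card_of_nuSum_eq_zero hne hrel
    rw [hc'] at this
    omega
  intro p hp
  by_contra hpD
  have : p ∈ c'.support := hc' ▸ Finset.mem_filter.2 ⟨hp, hpD⟩
  simp [hzero] at this

-- Residuation twice: first off the line through two points of the support, then off the line
-- which the induction hypothesis provides for what is left.
theorem exists_line_of_nuSum_eq_zero [Infinite K] {t : ℕ} {c : Pm K m →₀ K} (h : nuSum t c = 0)
    (hcard : c.support.card ≤ 2 * t + 1) :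
    ∃ D : Submodule K (Fin (m + 1) → K), Module.finrank K D ≤ 2 ∧ ∀ p ∈ c.support, p.rep ∈ D := by
  classical
  induction t generalizing c with
  | zero =>
    rcases eq_or_ne c 0 with rfl | hc
    · exact ⟨⊥, by simp, by simp⟩
    · have := add_two_le_card_of_nuSum_eq_zero hc h
      omega
  | succ t ih =>
    rcases eq_or_ne c 0 with rfl | hc
    · exact ⟨⊥, by simp, by simp⟩
    have hc2 := add_two_le_card_of_nuSum_eq_zero hc h
    obtain ⟨p, hp, q, hq, hpq⟩ := Finset.one_lt_card.1 (show 1 < c.support.card by omega)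
    let D₀ := Submodule.span K {p.rep, q.rep}
    obtain ⟨c₁, hc₁, hrel₁⟩ :=
      exists_nuSum_eq_zero_support_filter c D₀ fun f _ => by rw [h]; rfl
    have hcard₁ : c₁.support.card + 2 ≤ c.support.card := by
      have hsub : {p, q} ⊆ c.support.filter (·.rep ∈ D₀) := by
        simp only [Finset.insert_subset_iff, Finset.singleton_subset_iff, Finset.mem_filter]
        exact ⟨⟨hp, Submodule.subset_span (by simp)⟩, hq, Submodule.subset_span (by simp)⟩
      have hle := Finset.card_le_card hsub
      have hsplit := Finset.card_filter_add_card_filter_not (s := c.support) (·.rep ∈ D₀)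
      rw [Finset.card_pair hpq] at hle
      rw [hc₁]
      omega
    obtain ⟨D, hD, hDc₁⟩ := ih hrel₁ (by omega)
    rcases eq_or_ne c₁ 0 with hzero | hne
    · refine ⟨D₀, (finrank_span_le_card _).trans (by simpa using Finset.card_le_two), ?_⟩
      exact rep_mem_of_card_filter_le (fun f _ => by rw [h]; rfl) (by simp [← hc₁, hzero])
    · refine ⟨D, hD, rep_mem_of_card_filter_le (fun f _ => by rw [h]; rfl) ?_⟩
      have hlarge := add_two_le_card_of_nuSum_eq_zero hne hrel₁
      have hsub : c₁.support ⊆ c.support.filter (·.rep ∈ D) := fun r hr =>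
        Finset.mem_filter.2 ⟨(Finset.mem_filter.1 (hc₁ ▸ hr)).1, hDc₁ r hr⟩
      have hle := Finset.card_le_card hsub
      have hsplit := Finset.card_filter_add_card_filter_not (s := c.support) (·.rep ∈ D)
      omega

end Relations

section LineRestriction

open MvPolynomial

variable {K : Type} [Field K] {m : ℕ}

/-- The restriction of polynomials to the affine chart `τ ↦ u + τ v` of the line through the points
`u` and `v`, as polynomials in the parameter `τ`. -/
noncomputable def lineRestrict (u v : Fin (m + 1) → K) : PR K m →ₐ[K] Polynomial K :=
  aeval fun i => Polynomial.C (u i) + Polynomial.C (v i) * Polynomial.X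

theorem lineRestrict_X (u v : Fin (m + 1) → K) (i : Fin (m + 1)) :
    lineRestrict u v (X i) = Polynomial.C (u i) + Polynomial.C (v i) * Polynomial.X := aeval_X _ _

theorem eval_lineRestrict (u v : Fin (m + 1) → K) (f : PR K m) (τ : K) :
    (lineRestrict u v f).eval τ = eval (u + τ • v) f := by
  have h : (Polynomial.aeval τ).comp (lineRestrict u v) = aeval (u + τ • v) := by
    ext i
    simp only [lineRestrict_X, AlgHom.comp_apply, aeval_X, Polynomial.coe_aeval_eq_eval,
      Polynomial.eval_add, Polynomial.eval_mul, Polynomial.eval_C, Polynomial.eval_X,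
      Pi.add_apply, Pi.smul_apply, smul_eq_mul, mul_comm]
  simpa [aeval_eq_eval] using DFunLike.congr_fun h f

theorem coeff_zero_lineRestrict (u v : Fin (m + 1) → K) (f : PR K m) :
    (lineRestrict u v f).coeff 0 = eval u f := by
  rw [Polynomial.coeff_zero_eq_eval_zero, eval_lineRestrict, zero_smul, add_zero]

theorem natDegree_lineRestrict_le (u v : Fin (m + 1) → K) {f : PR K m} {t : ℕ}
    (hf : f.IsHomogeneous t) : (lineRestrict u v f).natDegree ≤ t := by
  simpa [lineRestrict] using aeval_natDegree_le (m := t) (n := 1) f hf.totalDegree_le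
    (fun i => Polynomial.C (u i) + Polynomial.C (v i) * Polynomial.X) fun i => by compute_degree

theorem lineRestrict_eq_zero_iff [Infinite K] (u v : Fin (m + 1) → K) {f : PR K m} {t : ℕ}
    (hf : f.IsHomogeneous t) :
    lineRestrict u v f = 0 ↔ ∀ w ∈ Submodule.span K {u, v}, eval w f = 0 := by
  refine ⟨fun h0 w hw => ?_, fun h => Polynomial.funext fun τ => ?_⟩
  · obtain ⟨α, β, rfl⟩ := Submodule.mem_span_pair.1 hw
    have affine (α : K) (hα : α ≠ 0) : eval (α • u + β • v) f = 0 := by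
      have : α • u + β • v = α • (u + (α⁻¹ * β) • v) := by
        rw [smul_add, smul_smul, mul_inv_cancel_left₀ hα]
      rw [this, eval_smul_of_isHomogeneous hf, ← eval_lineRestrict, h0, Polynomial.eval_zero,
        mul_zero]
    have hX : Polynomial.X * lineRestrict (β • v) u f = 0 := by
      refine Polynomial.funext fun ε => ?_
      rcases eq_or_ne ε 0 with rfl | hε
      · simp
      · simp [eval_lineRestrict, add_comm (β • v), affine ε hε]
    rw [add_comm (α • u)]
    have hβ := (mul_eq_zero.1 hX).resolve_left Polynomial.X_ne_zero
    rw [← eval_lineRestrict (β • v) u f α, hβ, Polynomial.eval_zero]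
  · rw [eval_lineRestrict, Polynomial.eval_zero]
    exact h _ (Submodule.mem_span_pair.2 ⟨1, τ, by rw [one_smul]⟩)

theorem exists_linearForms_lineRestrict_eq [Infinite K] {u v : Fin (m + 1) → K}
    (h : LinearIndependent K ![u, v]) :
    ∃ x y : PR K m, x.IsHomogeneous 1 ∧ y.IsHomogeneous 1 ∧
      lineRestrict u v x = Polynomial.X ∧ lineRestrict u v y = 1 := by
  obtain ⟨g, hg⟩ := (Fintype.linearCombination K ![u, v]).exists_leftInverse_of_injective
    (LinearMap.ker_eq_bot.2 (linearIndependent_iff_injective_fintypeLinearCombination.1 h))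
  have hgu : g u = Pi.single 0 1 := by
    simpa [Fintype.linearCombination_apply_single] using DFunLike.congr_fun hg (Pi.single 0 1)
  have hgv : g v = Pi.single 1 1 := by
    simpa [Fintype.linearCombination_apply_single] using DFunLike.congr_fun hg (Pi.single 1 1)
  obtain ⟨x, hx, hxg⟩ := exists_linearForm_eval_eq (LinearMap.proj 1 ∘ₗ g)
  obtain ⟨y, hy, hyg⟩ := exists_linearForm_eval_eq (LinearMap.proj 0 ∘ₗ g)
  refine ⟨x, y, hx, hy, Polynomial.funext fun τ => ?_, Polynomial.funext fun τ => ?_⟩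
  · simp [eval_lineRestrict, hxg, hgu, hgv]
  · simp [eval_lineRestrict, hyg, hgu, hgv]

theorem exists_form_lineRestrict_eq [Infinite K] {u v : Fin (m + 1) → K}
    (h : LinearIndependent K ![u, v]) {q : Polynomial K} {t : ℕ} (hq : q.natDegree ≤ t) :
    ∃ f : PR K m, f.IsHomogeneous t ∧ lineRestrict u v f = q := by
  obtain ⟨x, y, hx, hy, hxX, hy1⟩ := exists_linearForms_lineRestrict_eq h
  refine ⟨∑ i ∈ Finset.range (t + 1), C (q.coeff i) * (x ^ i * y ^ (t - i)),
    IsHomogeneous.sum _ _ _ fun i hi => IsHomogeneous.C_mul ?_ _, ?_⟩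
  · have hit : i + (t - i) = t := by have := Finset.mem_range.1 hi; omega
    simpa [hit] using (hx.pow i).mul (hy.pow (t - i))
  · conv_rhs => rw [q.as_sum_range' (t + 1) (by omega)]
    simp [hxX, hy1, ← Polynomial.C_mul_X_pow_eq_monomial]

end LineRestriction

section Ideals

open MvPolynomial

attribute [local instance] MvPolynomial.gradedAlgebra

variable {K : Type} [Field K] {m : ℕ}

theorem decompose_homogeneousSubmodule_apply {σ R : Type*} [CommSemiring R] (f : MvPolynomial σ R)
    (n : ℕ) : (DirectSum.decompose (homogeneousSubmodule σ R) f n : MvPolynomial σ R) =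
      homogeneousComponent n f :=
  decomposition.decompose'_apply f n

theorem homogeneousComponent_X_mul {σ R : Type*} [CommSemiring R] (i : σ) (f : MvPolynomial σ R)
    (n : ℕ) : homogeneousComponent (1 + n) (X i * f) = X i * homogeneousComponent n f := by
  simpa only [decompose_homogeneousSubmodule_apply] using
    DirectSum.coe_decompose_mul_add_of_left_mem (homogeneousSubmodule σ R) (j := n) (b := f)
      (isHomogeneous_X R i)

theorem isHomogI_span {s : Set (PR K m)} (hs : ∀ f ∈ s, ∃ n, f.IsHomogeneous n) :
    IsHomogI (Ideal.span s) := fun f hf n => by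
  simpa only [decompose_homogeneousSubmodule_apply] using
    Ideal.homogeneous_span (homogeneousSubmodule (Fin (m + 1)) K) s hs n hf

theorem IsHomogI.inf {I J : Ideal (PR K m)} (hI : IsHomogI I) (hJ : IsHomogI J) :
    IsHomogI (I ⊓ J) := fun f hf n => ⟨hI f hf.1 n, hJ f hf.2 n⟩

theorem IsSatI.inf {I J : Ideal (PR K m)} (hI : IsSatI I) (hJ : IsSatI J) : IsSatI (I ⊓ J) :=
  fun f hf => ⟨hI f fun i => (hf i).1, hJ f fun i => (hf i).2⟩

theorem IsHomogI.le_of_forall_isHomogeneous {I J : Ideal (PR K m)} (hI : IsHomogI I)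
    (h : ∀ f n, f.IsHomogeneous n → f ∈ I → f ∈ J) : I ≤ J := fun f hf => by
  rw [← sum_homogeneousComponent f]
  exact J.sum_mem fun n _ => h _ n (homogeneousComponent_isHomogeneous n f) (hI f hf n)

theorem IsHomogI.isSatI {I : Ideal (PR K m)} (hI : IsHomogI I)
    (h : ∀ f n, f.IsHomogeneous n → (∀ i, X i * f ∈ I) → f ∈ I) : IsSatI I := fun f hf => by
  rw [← sum_homogeneousComponent f]
  refine I.sum_mem fun n _ => h _ n (homogeneousComponent_isHomogeneous n f) fun i => ?_
  rw [← homogeneousComponent_X_mul]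
  exact hI _ (hf i) _

theorem isHomogI_idealOfSet (S : Set (Pm K m)) : IsHomogI (idealOfSet S) :=
  isHomogI_span fun _ hf => hf.1

theorem mem_idealOfSet_iff {S : Set (Pm K m)} {f : PR K m} {n : ℕ} (hf : f.IsHomogeneous n) :
    f ∈ idealOfSet S ↔ ∀ a ∈ S, eval a.rep f = 0 := by
  refine ⟨fun h a ha => ?_, fun h => Ideal.subset_span ⟨⟨n, hf⟩, h⟩⟩
  have hle : idealOfSet S ≤ RingHom.ker (eval a.rep) := Ideal.span_le.2 fun g hg => hg.2 a ha
  exact hle h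

theorem idealOfSet_anti {S T : Set (Pm K m)} (h : S ⊆ T) : idealOfSet T ≤ idealOfSet S :=
  Ideal.span_mono fun _ hf => ⟨hf.1, fun a ha => hf.2 a (h ha)⟩

theorem isSatI_idealOfSet (S : Set (Pm K m)) : IsSatI (idealOfSet S) := by
  refine (isHomogI_idealOfSet S).isSatI fun f n hf h => (mem_idealOfSet_iff hf).2 fun a ha => ?_
  obtain ⟨i, hi⟩ := Function.ne_iff.1 a.rep_nonzero
  have hXi := (mem_idealOfSet_iff ((isHomogeneous_X K i).mul hf)).1 (h i) a ha
  rw [map_mul, eval_X] at hXi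
  exact (mul_eq_zero.1 hXi).resolve_left hi

/-- The saturated homogeneous ideal of the subscheme of degree `k` supported at the point `u` of the
line through `u` and `v`: a form belongs to it iff its restriction to the line vanishes to order `k`
at `u`. -/
noncomputable def jetIdeal (u v : Fin (m + 1) → K) (k : ℕ) : Ideal (PR K m) :=
  Ideal.span {f | (∃ n, f.IsHomogeneous n) ∧ Polynomial.X ^ k ∣ lineRestrict u v f}

theorem isHomogI_jetIdeal (u v : Fin (m + 1) → K) (k : ℕ) : IsHomogI (jetIdeal u v k) :=
  isHomogI_span fun _ hf => hf.1

theorem mem_jetIdeal_iff {u v : Fin (m + 1) → K} {k : ℕ} {f : PR K m} {n : ℕ}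
    (hf : f.IsHomogeneous n) : f ∈ jetIdeal u v k ↔ Polynomial.X ^ k ∣ lineRestrict u v f := by
  refine ⟨fun h => ?_, fun h => Ideal.subset_span ⟨⟨n, hf⟩, h⟩⟩
  have hle : jetIdeal u v k ≤ (Ideal.span {Polynomial.X ^ k}).comap (lineRestrict u v) :=
    Ideal.span_le.2 fun g hg => Ideal.mem_span_singleton.2 hg.2
  exact Ideal.mem_span_singleton.1 (hle h)

theorem isSatI_jetIdeal {u : Fin (m + 1) → K} (hu : u ≠ 0) (v : Fin (m + 1) → K) (k : ℕ) :
    IsSatI (jetIdeal u v k) := by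
  refine (isHomogI_jetIdeal u v k).isSatI fun f n hf h => (mem_jetIdeal_iff hf).2 ?_
  obtain ⟨i, hi⟩ := Function.ne_iff.1 hu
  have hXi := (mem_jetIdeal_iff ((isHomogeneous_X K i).mul hf)).1 (h i)
  rw [map_mul] at hXi
  refine Polynomial.prime_X.pow_dvd_of_dvd_mul_left k ?_ hXi
  rwa [Polynomial.X_dvd_iff, coeff_zero_lineRestrict, eval_X]

theorem jetIdeal_le_jetIdeal {u v : Fin (m + 1) → K} {k l : ℕ} (h : k ≤ l) :
    jetIdeal u v l ≤ jetIdeal u v k :=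
  Ideal.span_mono fun _ hf => ⟨hf.1, (pow_dvd_pow _ h).trans hf.2⟩

/-- The map sending a form to the class of its restriction to the line through `u` and `v`, modulo
vanishing to order `k` at `u`. -/
noncomputable def jetMap (t : ℕ) (u v : Fin (m + 1) → K) (k : ℕ) :
    Hd K m t →ₗ[K] Polynomial K ⧸ Ideal.span {(Polynomial.X : Polynomial K) ^ k} :=
  (Ideal.Quotient.mkₐ K _).toLinearMap ∘ₗ (lineRestrict u v).toLinearMap ∘ₗ (Hd K m t).subtype

theorem jetMap_eq_zero_iff {t : ℕ} {u v : Fin (m + 1) → K} {k : ℕ} (f : Hd K m t) :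
    jetMap t u v k f = 0 ↔ (f : PR K m) ∈ jetIdeal u v k := by
  rw [mem_jetIdeal_iff f.2, ← Ideal.mem_span_singleton]
  exact Ideal.Quotient.eq_zero_iff_mem

theorem jetMap_surjective [Infinite K] {u v : Fin (m + 1) → K} (h : LinearIndependent K ![u, v])
    {t k : ℕ} (hkt : k ≤ t) : Function.Surjective (jetMap t u v k) := fun c => by
  obtain ⟨q, rfl⟩ := Ideal.Quotient.mk_surjective c
  have hmonic := Polynomial.monic_X_pow (R := K) k
  have hdeg : (q %ₘ Polynomial.X ^ k).natDegree ≤ t :=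
    (Polynomial.natDegree_modByMonic_le q hmonic).trans (by simpa using hkt)
  obtain ⟨f, hf, hfq⟩ := exists_form_lineRestrict_eq h hdeg
  refine ⟨⟨f, hf⟩, Ideal.Quotient.eq.2 (Ideal.mem_span_singleton.2 ?_)⟩
  change _ ∣ lineRestrict u v f - q
  rw [hfq, Polynomial.modByMonic_eq_sub_mul_div, sub_sub_cancel_left, dvd_neg]
  exact dvd_mul_right _ _

theorem hilbQ_eq_finrank_range {t : ℕ} {I : Ideal (PR K m)} {V : Type*} [AddCommGroup V]
    [Module K V] (θ : Hd K m t →ₗ[K] V) (hθ : ∀ f, θ f = 0 ↔ (f : PR K m) ∈ I) :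
    hilbQ I t = Module.finrank K (LinearMap.range θ) := by
  let π := (Ideal.Quotient.mkₐ K I).toLinearMap ∘ₗ (Hd K m t).subtype
  have hker : LinearMap.ker π = LinearMap.ker θ :=
    Submodule.ext fun f => Ideal.Quotient.eq_zero_iff_mem.trans (hθ f).symm
  have hrange : (Hd K m t).map (Ideal.Quotient.mkₐ K I).toLinearMap = LinearMap.range π := by
    rw [LinearMap.range_comp, Submodule.range_subtype]
  rw [hilbQ, hrange, ← π.quotKerEquivRange.finrank_eq,
    (Submodule.quotEquivOfEq _ _ hker).finrank_eq, θ.quotKerEquivRange.finrank_eq]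

theorem idealDeg_jetIdeal [Infinite K] {u v : Fin (m + 1) → K} (h : LinearIndependent K ![u, v])
    (k : ℕ) : idealDeg (jetIdeal u v k) = k := by
  refine (tendsto_const_nhds.congr' ?_).limsup_eq
  filter_upwards [Filter.eventually_ge_atTop k] with t ht
  rw [hilbQ_eq_finrank_range _ jetMap_eq_zero_iff,
    LinearMap.range_eq_top.2 (jetMap_surjective h ht), finrank_top,
    finrank_quotient_span_eq_natDegree, Polynomial.natDegree_X_pow]

end Ideals

section Classification

open MvPolynomial

variable {K : Type} [Field K] {m : ℕ}

theorem IsSatI.mem_of_mul_mem {I : Ideal (PR K m)} (hI : IsSatI I) {x y g : PR K m}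
    (hxy : ∀ i, X i ∈ I ⊔ Ideal.span {x, y}) {N : ℕ} (hN : x ^ N ∈ I) (hg : y * g ∈ I) :
    g ∈ I := by
  suffices key : ∀ N g, x ^ N * g ∈ I → y * g ∈ I → g ∈ I from key N g (I.mul_mem_right g hN) hg
  intro N
  induction N with
  | zero => exact fun g hx _ => by simpa using hx
  | succ N ih =>
    intro g hx hy
    have hxg : x * g ∈ I :=
      ih _ (by rwa [← mul_assoc, ← pow_succ]) (by rw [mul_left_comm]; exact I.mul_mem_left x hy)
    have hle : I ⊔ Ideal.span {x, y} ≤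
        Submodule.comap (LinearMap.toSpanSingleton (PR K m) _ g) I := by
      refine sup_le (fun r hr => I.mul_mem_right g hr) (Ideal.span_le.2 ?_)
      rintro r (rfl | rfl)
      exacts [hxg, hy]
    exact hI g fun i => hle (hxy i)

theorem IsSatI.mem_of_pow_mul_mem {I : Ideal (PR K m)} (hI : IsSatI I) {x y g : PR K m}
    (hxy : ∀ i, X i ∈ I ⊔ Ideal.span {x, y}) {N : ℕ} (hN : x ^ N ∈ I) {T : ℕ}
    (hg : y ^ T * g ∈ I) : g ∈ I := by
  induction T with
  | zero => simpa using hg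
  | succ T ih => exact ih (hI.mem_of_mul_mem hxy hN (by rwa [← mul_assoc, ← pow_succ']))

theorem IsHomogI.exists_isHomogeneous_of_mem_map {I : Ideal (PR K m)} (hI : IsHomogI I)
    {u v : Fin (m + 1) → K} {y : PR K m} (hy : y.IsHomogeneous 1) (hy1 : lineRestrict u v y = 1)
    (hsurj : Function.Surjective (lineRestrict u v)) {q : Polynomial K}
    (hq : q ∈ I.map (lineRestrict u v)) :
    ∃ T, ∀ t, T ≤ t → ∃ f ∈ I, f.IsHomogeneous t ∧ lineRestrict u v f = q := by
  obtain ⟨f, hf, rfl⟩ := (Ideal.mem_map_iff_of_surjective (lineRestrict u v) hsurj).1 hq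
  refine ⟨f.totalDegree, fun t ht => ⟨∑ n ∈ Finset.range (f.totalDegree + 1),
    y ^ (t - n) * homogeneousComponent n f, I.sum_mem fun n _ => I.mul_mem_left _ (hI f hf n),
    IsHomogeneous.sum _ _ _ fun n hn => ?_, ?_⟩⟩
  · have hnt : t - n + n = t := by have := Finset.mem_range.1 hn; omega
    simpa [hnt] using (hy.pow (t - n)).mul (homogeneousComponent_isHomogeneous n f)
  · simp only [map_sum, map_mul, map_pow, hy1, one_pow, one_mul]
    rw [← map_sum, sum_homogeneousComponent]

theorem lineRestrict_surjective [Infinite K] {u v : Fin (m + 1) → K}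
    (h : LinearIndependent K ![u, v]) : Function.Surjective (lineRestrict u v) := fun q =>
  have ⟨f, _, hf⟩ := exists_form_lineRestrict_eq h (le_refl q.natDegree)
  ⟨f, hf⟩

-- Homogenising with the form `y`, which restricts to `1`, turns a relation on the line into one
-- between forms, up to a power of `y`; saturation then removes that power.
theorem exists_eq_jetIdeal_of_pow_mem [Infinite K] {I : Ideal (PR K m)} (hI : IsHomogI I)
    (hs : IsSatI I) {u v : Fin (m + 1) → K} (h : LinearIndependent K ![u, v])
    (hline : ∀ f n, f.IsHomogeneous n → lineRestrict u v f = 0 → f ∈ I)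
    {x : PR K m} (hx : x.IsHomogeneous 1) (hxX : lineRestrict u v x = Polynomial.X)
    {N : ℕ} (hN : x ^ N ∈ I) : ∃ k, I = jetIdeal u v k := by
  obtain ⟨y, hy, hy1⟩ := exists_form_lineRestrict_eq h (q := 1) (t := 1) (by simp)
  have hxy (i) : X i ∈ I ⊔ Ideal.span {x, y} := by
    have hr : X i - (C (u i) * y + C (v i) * x) ∈ I := by
      refine hline _ 1 ((isHomogeneous_X K i).sub ((hy.C_mul _).add (hx.C_mul _))) ?_
      simp [hxX, hy1, lineRestrict_X]
    rw [← sub_add_cancel (X i) (C (u i) * y + C (v i) * x)]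
    exact Submodule.add_mem_sup hr (Ideal.mem_span_pair.2 ⟨C (v i), C (u i), add_comm _ _⟩)
  obtain ⟨k, hk⟩ : ∃ k, I.map (lineRestrict u v) = Ideal.span {Polynomial.X ^ k} := by
    obtain ⟨g, hg⟩ := (IsPrincipalIdealRing.principal (I.map (lineRestrict u v))).principal
    have hXN := Ideal.mem_map_of_mem (lineRestrict u v) hN
    rw [map_pow, hxX, hg] at hXN
    obtain ⟨k, -, hk⟩ := (dvd_prime_pow Polynomial.prime_X N).1 (Ideal.mem_span_singleton.1 hXN)
    exact ⟨k, hg.trans (Ideal.span_singleton_eq_span_singleton.2 hk)⟩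
  refine ⟨k, le_antisymm (hI.le_of_forall_isHomogeneous fun f n hf hfI => ?_)
    ((isHomogI_jetIdeal u v k).le_of_forall_isHomogeneous fun f n hf hfk => ?_)⟩
  · rw [mem_jetIdeal_iff hf, ← Ideal.mem_span_singleton, ← hk]
    exact Ideal.mem_map_of_mem _ hfI
  · rw [mem_jetIdeal_iff hf, ← Ideal.mem_span_singleton, ← hk] at hfk
    obtain ⟨T, hT⟩ :=
      hI.exists_isHomogeneous_of_mem_map hy hy1 (lineRestrict_surjective h) hfk
    obtain ⟨g, hgI, hg, hgf⟩ := hT (T + n) (by omega)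
    have hhom : (y ^ T * f - g).IsHomogeneous (T + n) := by
      simpa using ((hy.pow T).mul hf).sub (by simpa using hg)
    have hyf := I.add_mem (hline _ _ hhom (by simp [hy1, hgf])) hgI
    rw [sub_add_cancel] at hyf
    exact hs.mem_of_pow_mul_mem hxy hN hyf

theorem IsHomogI.mem_radical_of_forall_mem_pzeroLocus [IsAlgClosed K] {I : Ideal (PR K m)}
    (hI : IsHomogI I) {f : PR K m} {t : ℕ} (hf : f.IsHomogeneous t) (ht : t ≠ 0)
    (h : ∀ a ∈ pzeroLocus I, eval a.rep f = 0) : f ∈ I.radical := by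
  rw [← vanishingIdeal_zeroLocus_eq_radical (K := K) I, mem_vanishingIdeal_iff]
  intro w hw
  rw [aeval_eq_eval]
  rcases eq_or_ne w 0 with rfl | hw0
  · simpa [ht] using eval_smul_of_isHomogeneous hf 0 0
  obtain ⟨c, hc⟩ := Projectivization.exists_smul_eq_mk_rep K w hw0
  have hmem : Projectivization.mk K w hw0 ∈ pzeroLocus I := fun g hg n => by
    have hgw : eval w (homogeneousComponent n g) = 0 := by
      simpa [aeval_eq_eval] using hw _ (hI g hg n)
    rw [← hc, Units.smul_def, eval_smul_of_isHomogeneous (homogeneousComponent_isHomogeneous n g),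
      hgw, mul_zero]
  have hfw := h _ hmem
  rw [← hc, Units.smul_def, eval_smul_of_isHomogeneous hf] at hfw
  exact (mul_eq_zero.1 hfw).resolve_left (pow_ne_zero t c.ne_zero)

theorem rep_mem_iff_submodule_le {p : Pm K m} {W : Submodule K (Fin (m + 1) → K)} :
    p.rep ∈ W ↔ p.submodule ≤ W := by
  rw [Projectivization.submodule_eq, Submodule.span_singleton_le_iff_mem]

theorem finrank_span_pair_eq_two {V : Type*} [AddCommGroup V] [Module K V] {u v : V}
    (h : LinearIndependent K ![u, v]) : Module.finrank K (Submodule.span K {u, v}) = 2 := by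
  have := finrank_span_eq_card h
  rwa [Matrix.range_cons_cons_empty, Fintype.card_fin] at this

theorem exists_linearIndependent_pair_span_eq {V : Type*} [AddCommGroup V] [Module K V]
    {W : Submodule K V} (hW : Module.finrank K W = 2) {u : V} (hu : u ≠ 0) (huW : u ∈ W) :
    ∃ v, LinearIndependent K ![u, v] ∧ W = Submodule.span K {u, v} := by
  have : FiniteDimensional K W := Module.finite_of_finrank_eq_succ hW
  obtain ⟨v, hv⟩ := exists_linearIndependent_pair_of_one_lt_finrank (R := K) (by omega)
    (show (⟨u, huW⟩ : W) ≠ 0 from fun h => hu (congrArg Subtype.val h))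
  have hli : LinearIndependent K ![u, v] := LinearIndependent.pair_iff.2 fun s t hst =>
    LinearIndependent.pair_iff.1 hv s t (Subtype.ext hst)
  refine ⟨v, hli, (Submodule.eq_of_le_of_finrank_eq (Submodule.span_le.2 ?_)
    ((finrank_span_pair_eq_two hli).trans hW.symm)).symm⟩
  rintro w (rfl | rfl)
  exacts [huW, v.2]

theorem eval_eq_zero_of_mem_pzeroLocus {I : Ideal (PR K m)} {a : Pm K m} (ha : a ∈ pzeroLocus I)
    {f : PR K m} {n : ℕ} (hf : f.IsHomogeneous n) (hfI : f ∈ I) : eval a.rep f = 0 := by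
  simpa only [homogeneousComponent_eq_self hf] using ha f hfI n

theorem rep_mem_of_mem_pzeroLocus [Infinite K] {I : Ideal (PR K m)}
    {W : Submodule K (Fin (m + 1) → K)} (hI : idealOfSet {p : Pm K m | p.submodule ≤ W} ≤ I)
    {a : Pm K m} (ha : a ∈ pzeroLocus I) : a.rep ∈ W := by
  by_contra haW
  obtain ⟨l, hl, hlW, hla⟩ := exists_linearForm_vanishing_on W (fun _ : Unit => a.rep) fun _ => haW
  refine hla () (eval_eq_zero_of_mem_pzeroLocus ha hl (hI ((mem_idealOfSet_iff hl).2 ?_)))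
  exact fun p hp => hlW _ (rep_mem_iff_submodule_le.2 hp)

theorem PSub.exists_eq_jetIdeal [IsAlgClosed K] (Z : PSub K m) {W : Submodule K (Fin (m + 1) → K)}
    (hW : Module.finrank K W = 2) (hZW : idealOfSet {p : Pm K m | p.submodule ≤ W} ≤ Z.I)
    {a : Pm K m} (ha : pzeroLocus Z.I = {a}) :
    ∃ v, LinearIndependent K ![a.rep, v] ∧ W = Submodule.span K {a.rep, v} ∧
      Z.I = jetIdeal a.rep v (idealDeg Z.I) := by
  have : Infinite K := IsAlgClosed.instInfinite
  have haW : a.rep ∈ W := rep_mem_of_mem_pzeroLocus hZW (ha.symm ▸ Set.mem_singleton a)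
  obtain ⟨v, hv, hWv⟩ := exists_linearIndependent_pair_span_eq hW a.rep_nonzero haW
  obtain ⟨x, hx, hxX⟩ := exists_form_lineRestrict_eq hv (q := Polynomial.X) (t := 1) (by simp)
  have hxa : eval a.rep x = 0 := by rw [← coeff_zero_lineRestrict _ v, hxX, Polynomial.coeff_X_zero]
  obtain ⟨N, hN⟩ := Z.homog.mem_radical_of_forall_mem_pzeroLocus hx one_ne_zero fun p hp => by
    rw [ha, Set.mem_singleton_iff] at hp
    rwa [hp]
  obtain ⟨k, hk⟩ := exists_eq_jetIdeal_of_pow_mem Z.homog Z.sat hv (fun f n hf h0 =>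
    hZW ((mem_idealOfSet_iff hf).2 fun p hp => (lineRestrict_eq_zero_iff _ _ hf).1 h0 _
      (hWv ▸ rep_mem_iff_submodule_le.2 hp))) hx hxX hN
  exact ⟨v, hv, hWv, by rw [hk, idealDeg_jetIdeal hv]⟩

end Classification

section Spans

open MvPolynomial

variable {K : Type} [Field K] {m : ℕ}

/-- The degree-`d` part of an ideal, as a space of forms. -/
noncomputable def formsIn (I : Ideal (PR K m)) (d : ℕ) : Submodule K (Hd K m d) :=
  (I.restrictScalars K).comap (Hd K m d).subtype

theorem mem_formsIn {I : Ideal (PR K m)} {d : ℕ} {f : Hd K m d} :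
    f ∈ formsIn I d ↔ (f : PR K m) ∈ I := Iff.rfl

theorem schemeSpanSub_eq_dualAnnihilator (I : Ideal (PR K m)) (d : ℕ) :
    schemeSpanSub I d = (formsIn I d).dualAnnihilator := by
  ext φ
  rw [Submodule.mem_dualAnnihilator]
  rfl

theorem schemeSpanSub_inf (I J : Ideal (PR K m)) (d : ℕ) :
    schemeSpanSub (I ⊓ J) d = schemeSpanSub I d ⊔ schemeSpanSub J d := by
  simp only [schemeSpanSub_eq_dualAnnihilator]
  exact Subspace.dualAnnihilator_inf_eq (formsIn I d) (formsIn J d)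

theorem schemeSpanSub_idealOfSet (S : Set (Pm K m)) (d : ℕ) :
    schemeSpanSub (idealOfSet S) d = dualSpan d S := by
  have : FiniteDimensional K (Hd K m d) :=
    Module.Finite.iff_fg.2 (homogeneousSubmodule_fg (Fin (m + 1)) K d)
  have hforms : formsIn (idealOfSet S) d = (dualSpan d S).dualCoannihilator := by
    ext f
    rw [mem_formsIn, mem_idealOfSet_iff f.2, dualSpan, Submodule.mem_dualCoannihilator]
    refine ⟨fun h φ hφ => ?_, fun h a ha => ?_⟩
    · have hle : Submodule.span K ((fun a => nu d a.rep) '' S) ≤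
          LinearMap.ker (Module.Dual.eval K (Hd K m d) f) := by
        rw [Submodule.span_le]
        rintro _ ⟨a, ha, rfl⟩
        exact (nu_apply d a.rep f).trans (h a ha)
      exact hle hφ
    · rw [← nu_apply]
      exact h _ (Submodule.subset_span ⟨a, ha, rfl⟩)
  rw [schemeSpanSub_eq_dualAnnihilator, hforms, Subspace.dualCoannihilator_dualAnnihilator_eq]

/-- The functional on degree-`d` forms induced by a functional `ℓ` on polynomials in the parameter
`τ` of the line `τ ↦ u + τ v`. -/
noncomputable def lineJet (d : ℕ) (u v : Fin (m + 1) → K) (ℓ : Module.Dual K (Polynomial K)) :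
    Module.Dual K (Hd K m d) :=
  ℓ ∘ₗ (lineRestrict u v).toLinearMap ∘ₗ (Hd K m d).subtype

theorem lineJet_apply (d : ℕ) (u v : Fin (m + 1) → K) (ℓ : Module.Dual K (Polynomial K))
    (f : Hd K m d) : lineJet d u v ℓ f = ℓ (lineRestrict u v f) := rfl

theorem mem_schemeSpanSub_jetIdeal_iff {d k : ℕ} {u v : Fin (m + 1) → K}
    {φ : Module.Dual K (Hd K m d)} :
    φ ∈ schemeSpanSub (jetIdeal u v k) d ↔
      ∃ ℓ : Module.Dual K (Polynomial K), (∀ q, ℓ (Polynomial.X ^ k * q) = 0) ∧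
        lineJet d u v ℓ = φ := by
  constructor
  · intro hφ
    have hker : LinearMap.ker (jetMap d u v k) = formsIn (jetIdeal u v k) d :=
      Submodule.ext jetMap_eq_zero_iff
    rw [schemeSpanSub_eq_dualAnnihilator, ← hker,
      ← LinearMap.range_dualMap_eq_dualAnnihilator_ker] at hφ
    obtain ⟨ℓ, rfl⟩ := hφ
    refine ⟨ℓ ∘ₗ (Ideal.Quotient.mkₐ K _).toLinearMap, fun q => ?_, rfl⟩
    have hq : Ideal.Quotient.mkₐ K (Ideal.span {Polynomial.X ^ k}) (Polynomial.X ^ k * q) = 0 :=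
      Ideal.Quotient.eq_zero_iff_mem.2 (Ideal.mem_span_singleton.2 (dvd_mul_right _ q))
    exact (congrArg ℓ hq).trans ℓ.map_zero
  · rintro ⟨ℓ, hℓ, rfl⟩ f hf
    obtain ⟨q, hq⟩ := (mem_jetIdeal_iff f.2).1 hf
    rw [lineJet_apply, hq, hℓ]

theorem apply_X_pow_mul_of_forall_apply_X_pow_succ_mul {k : ℕ}
    {ℓ : Module.Dual K (Polynomial K)} (h : ∀ q, ℓ (Polynomial.X ^ (k + 1) * q) = 0)
    (q : Polynomial K) :
    ℓ (Polynomial.X ^ k * q) = q.coeff 0 * ℓ (Polynomial.X ^ k) := by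
  have hq : Polynomial.X ^ k * q =
      Polynomial.X ^ (k + 1) * q.divX + q.coeff 0 • Polynomial.X ^ k := by
    conv_lhs => rw [← q.divX_mul_X_add]
    rw [Polynomial.smul_eq_C_mul]
    ring
  rw [hq, map_add, map_smul, h, zero_add, smul_eq_mul]

/-- `ℓ` is a functional on polynomials that depends exactly on the jet of order `k` at `0`. -/
structure IsJetOfOrder (k : ℕ) (ℓ : Module.Dual K (Polynomial K)) : Prop where
  apply_X_pow_succ_mul : ∀ q, ℓ (Polynomial.X ^ (k + 1) * q) = 0
  apply_X_pow_ne_zero : ℓ (Polynomial.X ^ k) ≠ 0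

theorem IsJetOfOrder.apply_X_pow_mul {k : ℕ} {ℓ : Module.Dual K (Polynomial K)}
    (h : IsJetOfOrder k ℓ) (q : Polynomial K) :
    ℓ (Polynomial.X ^ k * q) = q.coeff 0 * ℓ (Polynomial.X ^ k) :=
  apply_X_pow_mul_of_forall_apply_X_pow_succ_mul h.apply_X_pow_succ_mul q

end Spans

section Ranks

open MvPolynomial

variable {K : Type} [Field K] {m : ℕ}

theorem XSet_eq_nuSet_univ (d : ℕ) : XSet K m d = nuSet d Set.univ := by
  ext Q
  simp [XSet, nuSet]

variable [Infinite K]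

theorem nu_rep_ne_zero (d : ℕ) (a : Pm K m) : nu d a.rep ≠ 0 := by
  obtain ⟨f, hf, -, hfa⟩ := exists_form_separating (Finset.notMem_empty a) (Nat.zero_le d)
  exact fun h => hfa (by rw [← nu_apply d _ ⟨f, hf⟩, h, LinearMap.zero_apply])

/-- The Veronese embedding `ν_d`, as a map between projective spaces. -/
noncomputable def veronese (d : ℕ) (a : Pm K m) : PN K m d :=
  Projectivization.mk K (nu d a.rep) (nu_rep_ne_zero d a)

theorem nuSet_eq_image (d : ℕ) (Y : Set (Pm K m)) : nuSet d Y = veronese d '' Y := by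
  ext Q
  refine exists_congr fun a => and_congr_right fun _ => ?_
  rw [← Projectivization.submodule_mk _ (nu_rep_ne_zero d a),
    Projectivization.submodule_injective.eq_iff]
  exact eq_comm

theorem span_rep_image_veronese (d : ℕ) (A : Set (Pm K m)) :
    Submodule.span K (Projectivization.rep '' (veronese d '' A)) = dualSpan d A := by
  have hrep (a : Pm K m) :
      Submodule.span K {(veronese d a).rep} = Submodule.span K {nu d a.rep} := by
    rw [← Projectivization.submodule_eq, veronese, Projectivization.submodule_mk]
  rw [dualSpan, Set.image_image, Submodule.span_eq_iSup_of_singleton_spans, iSup_image,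
    Submodule.span_eq_iSup_of_singleton_spans, iSup_image]
  simp only [hrep]

theorem exists_finset_of_subset_nuSet {d : ℕ} {Y : Set (Pm K m)} {S : Finset (PN K m d)}
    (hS : ↑S ⊆ nuSet d Y) :
    ∃ A : Finset (Pm K m), ↑A ⊆ Y ∧ A.card = S.card ∧
      Submodule.span K (Projectivization.rep '' (S : Set (PN K m d))) = dualSpan d ↑A := by
  classical
  rw [nuSet_eq_image] at hS
  obtain ⟨A, hAY, hinj, rfl⟩ := Finset.exists_subset_injOn_image_eq_of_surjOn Y S hS
  exact ⟨A, hAY, (Finset.card_image_of_injOn hinj).symm,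
    by rw [Finset.coe_image, span_rep_image_veronese]⟩

theorem exists_finset_subset_nuSet (d : ℕ) {Y : Set (Pm K m)} {A : Finset (Pm K m)}
    (hA : ↑A ⊆ Y) :
    ∃ S : Finset (PN K m d), ↑S ⊆ nuSet d Y ∧ S.card ≤ A.card ∧
      Submodule.span K (Projectivization.rep '' (S : Set (PN K m d))) = dualSpan d ↑A := by
  classical
  refine ⟨A.image (veronese d), ?_, Finset.card_image_le, ?_⟩
  · rw [Finset.coe_image, nuSet_eq_image]
    exact Set.image_mono hA
  · rw [Finset.coe_image, span_rep_image_veronese]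

theorem rankWrt_nuSet_le {d : ℕ} {Y : Set (Pm K m)} {A : Finset (Pm K m)} (hA : ↑A ⊆ Y)
    {P : PN K m d} (hP : P.rep ∈ dualSpan d ↑A) : rankWrt (nuSet d Y) P ≤ A.card := by
  obtain ⟨S, hS, hcard, hspan⟩ := exists_finset_subset_nuSet d hA
  exact le_trans (Nat.sInf_le ⟨S, hS, rfl, by rwa [hspan]⟩) hcard

theorem srank_le_card {d : ℕ} {A : Finset (Pm K m)} {P : PN K m d} (hP : inSpanSet d ↑A P) :
    srank d P ≤ A.card := by
  rw [srank, XSet_eq_nuSet_univ]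
  exact rankWrt_nuSet_le (Set.subset_univ _) hP

theorem exists_finset_card_eq_rankWrt {d : ℕ} {Y : Set (Pm K m)} {P : PN K m d}
    (hP : P.rep ∈ dualSpan d Y) :
    ∃ A : Finset (Pm K m), ↑A ⊆ Y ∧ A.card = rankWrt (nuSet d Y) P ∧ P.rep ∈ dualSpan d ↑A := by
  obtain ⟨c, hc, hcP⟩ := mem_dualSpan_iff.1 hP
  obtain ⟨S, hS, -, hspan⟩ := exists_finset_subset_nuSet d hc
  obtain ⟨S', hS', hcard, hPS'⟩ :=
    Nat.sInf_mem (s := {r | ∃ S : Finset (PN K m d), ↑S ⊆ nuSet d Y ∧ S.card = r ∧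
      P.rep ∈ Submodule.span K (Projectivization.rep '' (S : Set (PN K m d)))})
      ⟨_, S, hS, rfl, hspan ▸ hcP ▸ nuSum_mem_dualSpan d c⟩
  obtain ⟨A, hA, hAcard, hspanA⟩ := exists_finset_of_subset_nuSet hS'
  exact ⟨A, hA, hAcard.trans hcard, hspanA ▸ hPS'⟩

end Ranks

section Apolarity

open Polynomial

variable {K : Type} [Field K]

theorem exists_eq_X_pow_mul {P : K[X]} (hP : P ≠ 0) :
    ∃ j q, j ≤ P.natDegree ∧ q.coeff 0 ≠ 0 ∧ P = X ^ j * q := by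
  classical
  obtain ⟨q, hq, hdvd⟩ := exists_eq_pow_rootMultiplicity_mul_and_not_dvd P hP 0
  rw [C_0, sub_zero] at hq hdvd
  have hmult : P.rootMultiplicity 0 ≤ P.natDegree :=
    count_roots P ▸ (Multiset.count_le_card 0 P.roots).trans (card_roots' P)
  exact ⟨_, q, hmult, mt X_dvd_iff.2 hdvd, hq⟩

theorem dvd_of_forall_eval_eq_zero [IsAlgClosed K] {G q : K[X]} (hG : G.Separable)
    (h : ∀ t, G.eval t = 0 → q.eval t = 0) : G ∣ q := by
  rcases eq_or_ne q 0 with rfl | hq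
  · exact dvd_zero G
  · refine (IsAlgClosed.dvd_iff_roots_le_roots hG.ne_zero hq).2 ?_
    refine (Multiset.le_iff_subset (nodup_roots hG)).2 fun t ht => ?_
    exact (mem_roots hq).2 (h t (isRoot_of_mem_roots ht))

-- A double root `t` is a root of `X P' - (N + 1) P - X ^ N`, which does not depend on `α`. The
-- term `X ^ N` keeps this polynomial nonzero in every characteristic.
theorem exists_separable_add_X_pow [IsAlgClosed K] {P : K[X]} {N : ℕ} (hN : P.natDegree < N)
    (hP : P.coeff 0 ≠ 0) : ∃ α : K, α ≠ 0 ∧ (P + X ^ N + C α * X ^ (N + 1)).Separable := by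
  classical
  have : Infinite K := IsAlgClosed.instInfinite
  let D : K[X] := X * derivative P - C (N + 1 : K) * P - X ^ N
  have hD : D ≠ 0 := by
    refine ne_of_apply_ne (coeff · N) ?_
    obtain ⟨n, rfl⟩ := Nat.exists_eq_add_of_lt hN
    have hPN := coeff_eq_zero_of_natDegree_lt hN
    simp only [D, coeff_sub, coeff_X_mul, coeff_derivative, coeff_C_mul, coeff_X_pow_self,
      coeff_zero, hPN, zero_mul, mul_zero, zero_sub]
    simp
  obtain ⟨α, hα⟩ := Infinite.exists_notMem_finset
    (insert 0 (D.roots.toFinset.image fun t => -(P.eval t + t ^ N) / t ^ (N + 1)))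
  rw [Finset.mem_insert, not_or] at hα
  refine ⟨α, hα.1, (isCoprime_iff_aeval_ne_zero_of_isAlgClosed (k := K) K _ _).2 fun t => ?_⟩
  by_contra! hG
  obtain ⟨hG₁, hG₂⟩ := hG
  simp only [coe_aeval_eq_eval, derivative_add, derivative_X_pow, derivative_C_mul, eval_add,
    eval_mul, eval_C, eval_pow, eval_X, Nat.cast_add, Nat.cast_one, Nat.add_sub_cancel] at hG₁ hG₂
  have ht : t ≠ 0 := by
    rintro rfl
    have hN0 : N ≠ 0 := by omega
    simp [hN0, ← coeff_zero_eq_eval_zero, hP] at hG₁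
  have htD : D.eval t = 0 := by
    simp only [D, eval_sub, eval_mul, eval_X, eval_C, eval_pow]
    obtain ⟨n, rfl⟩ := Nat.exists_eq_add_of_lt hN
    simp only [Nat.add_sub_cancel] at hG₂
    linear_combination t * hG₂ - (↑(P.natDegree + n + 1) + 1 : K) * hG₁
  refine hα.2 (Finset.mem_image.2 ⟨t, by simpa [hD] using htD, ?_⟩)
  rw [div_eq_iff (pow_ne_zero _ ht)]
  linear_combination -hG₁

theorem IsJetOfOrder.exists_apolar {k : ℕ} {ℓ : Module.Dual K K[X]} (h : IsJetOfOrder k ℓ) :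
    ∃ P : K[X], P.natDegree ≤ k ∧ P.coeff 0 ≠ 0 ∧ ∀ q : K[X], q.natDegree < k → ℓ (P * q) = 0 := by
  let θ : degreeLT K (k + 1) →ₗ[K] Fin k → K :=
    LinearMap.pi fun i => ℓ ∘ₗ LinearMap.mulRight K (X ^ (i : ℕ)) ∘ₗ (degreeLT K (k + 1)).subtype
  obtain ⟨⟨P, hPk⟩, hθ, hP⟩ := (Submodule.ne_bot_iff _).1 (LinearMap.ker_ne_bot_of_finrank_lt
    (f := θ) (by rw [(degreeLTEquiv K (k + 1)).finrank_eq]; simp))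
  replace hP : P ≠ 0 := by simpa using hP
  have hdeg : P.natDegree ≤ k := by
    rw [mem_degreeLT, degree_eq_natDegree hP] at hPk
    exact Nat.lt_succ_iff.1 (by exact_mod_cast hPk)
  have hX (i : ℕ) (hi : i < k) : ℓ (P * X ^ i) = 0 := congrFun hθ ⟨i, hi⟩
  refine ⟨P, hdeg, fun hP0 => ?_, fun q hq => ?_⟩
  · obtain ⟨j, P₁, hjP, hP₁, rfl⟩ := exists_eq_X_pow_mul hP
    have hj0 : j ≠ 0 := by
      rintro rfl
      simp [hP₁] at hP0
    have hjk := hjP.trans hdeg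
    have := hX (k - j) (by omega)
    rw [mul_right_comm, ← pow_add, Nat.add_sub_cancel' hjk, h.apply_X_pow_mul] at this
    exact mul_ne_zero hP₁ h.apply_X_pow_ne_zero this
  · rw [q.as_sum_range' k hq, Finset.mul_sum, map_sum]
    refine Finset.sum_eq_zero fun i hi => ?_
    rw [← C_mul_X_pow_eq_monomial, mul_left_comm, ← smul_eq_C_mul, map_smul,
      hX i (Finset.mem_range.1 hi), smul_zero]

-- Sylvester: `ℓ` kills every multiple, of degree at most `d`, of a separable polynomial of degree
-- `d + 1 - k` that is apolar to it.
theorem IsJetOfOrder.exists_finset_forall_eval_eq_zero [IsAlgClosed K] {k d : ℕ}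
    {ℓ : Module.Dual K K[X]} (h : IsJetOfOrder k ℓ) (hd : 2 * k + 1 ≤ d) :
    ∃ R : Finset K, R.card + k ≤ d + 1 ∧
      ∀ q : K[X], q.natDegree ≤ d → (∀ t ∈ R, q.eval t = 0) → ℓ q = 0 := by
  classical
  obtain ⟨P, hPk, hP0, hP⟩ := h.exists_apolar
  obtain ⟨N, rfl⟩ := Nat.exists_eq_add_of_le' (show k ≤ d by omega)
  obtain ⟨α, hα, hsep⟩ := exists_separable_add_X_pow (show P.natDegree < N by omega) hP0
  set G := P + X ^ N + C α * X ^ (N + 1)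
  have hG : G.natDegree = N + 1 := by
    have hlow : (P + X ^ N).natDegree < (C α * X ^ (N + 1)).natDegree := by
      rw [natDegree_C_mul_X_pow _ _ hα, Nat.lt_succ_iff]
      exact natDegree_add_le_of_degree_le (by omega) (natDegree_X_pow_le N)
    rw [natDegree_add_eq_right_of_natDegree_lt hlow, natDegree_C_mul_X_pow _ _ hα]
  refine ⟨G.roots.toFinset, ?_, fun q hq hqG => ?_⟩
  · have := (Multiset.toFinset_card_le _).trans (card_roots' G)
    omega
  · obtain ⟨q', rfl⟩ := dvd_of_forall_eval_eq_zero hsep fun t ht =>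
      hqG t (by simpa [hsep.ne_zero] using ht)
    rcases eq_or_ne q' 0 with rfl | hq'
    · simp
    rw [natDegree_mul hsep.ne_zero hq', hG] at hq
    have hsplit : G * q' = P * q' + X ^ (k + 1) * (X ^ (N - (k + 1)) * (1 + C α * X) * q') := by
      obtain ⟨n, rfl⟩ := Nat.exists_eq_add_of_le (show k + 1 ≤ N by omega)
      simp only [G, Nat.add_sub_cancel_left]
      ring
    rw [hsplit, map_add, hP q' (by omega), h.apply_X_pow_succ_mul, add_zero]

end Apolarity

section Points

open MvPolynomial

variable {K : Type} [Field K] {m : ℕ}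

theorem exists_finset_lineJet_mem_dualSpan {d : ℕ} {u v : Fin (m + 1) → K}
    (h : LinearIndependent K ![u, v]) {ℓ : Module.Dual K (Polynomial K)} {R : Finset K}
    (hℓ : ∀ q : Polynomial K, q.natDegree ≤ d → (∀ t ∈ R, q.eval t = 0) → ℓ q = 0) :
    ∃ A : Finset (Pm K m), A.card ≤ R.card ∧ (∀ p ∈ A, p.rep ∈ Submodule.span K {u, v}) ∧
      lineJet d u v ℓ ∈ dualSpan d ↑A := by
  classical
  have hne (t : K) : u + t • v ≠ 0 := fun ht => by
    simpa using (LinearIndependent.pair_iff.1 h 1 t (by rwa [one_smul])).1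
  let point (t : K) : Pm K m := Projectivization.mk K (u + t • v) (hne t)
  have hpoint (t : K) : ∃ x : Kˣ, x • (u + t • v) = (point t).rep :=
    Projectivization.exists_smul_eq_mk_rep K _ _
  refine ⟨R.image point, Finset.card_image_le, fun p hp => ?_, ?_⟩
  · obtain ⟨t, -, rfl⟩ := Finset.mem_image.1 hp
    obtain ⟨x, hx⟩ := hpoint t
    rw [← hx]
    exact Submodule.smul_mem _ _ (Submodule.mem_span_pair.2 ⟨1, t, by rw [one_smul]⟩)
  · rw [← schemeSpanSub_idealOfSet]
    intro f hf
    refine hℓ (lineRestrict u v f) (natDegree_lineRestrict_le u v f.2) fun t ht => ?_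
    have hft := (mem_idealOfSet_iff f.2).1 hf (point t)
      (Finset.mem_coe.2 (Finset.mem_image_of_mem _ ht))
    obtain ⟨x, hx⟩ := hpoint t
    rw [← hx, Units.smul_def, eval_smul_of_isHomogeneous f.2] at hft
    rw [eval_lineRestrict]
    exact (mul_eq_zero.1 hft).resolve_left (pow_ne_zero _ x.ne_zero)

theorem IsJetOfOrder.exists_finset_lineJet_mem_dualSpan [IsAlgClosed K] {d k : ℕ}
    {u v : Fin (m + 1) → K} (h : LinearIndependent K ![u, v]) {ℓ : Module.Dual K (Polynomial K)}
    (hℓ : IsJetOfOrder k ℓ) (hd : 2 * k + 1 ≤ d) :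
    ∃ A : Finset (Pm K m), A.card + k ≤ d + 1 ∧ (∀ p ∈ A, p.rep ∈ Submodule.span K {u, v}) ∧
      lineJet d u v ℓ ∈ dualSpan d ↑A := by
  obtain ⟨R, hR, hker⟩ := hℓ.exists_finset_forall_eval_eq_zero hd
  obtain ⟨A, hAR, hA, hmem⟩ := _root_.exists_finset_lineJet_mem_dualSpan h hker
  exact ⟨A, by omega, hA, hmem⟩

end Points

section LowerBound

open MvPolynomial

variable {K : Type} [Field K] [Infinite K] {m d k : ℕ} {a : Pm K m} {v : Fin (m + 1) → K}
  {ℓ : Module.Dual K (Polynomial K)} {γ : Pm K m →₀ K}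

open scoped Classical in
theorem IsJetOfOrder.le_card_filter_eval_ne_zero (hℓ : IsJetOfOrder k ℓ)
    (h : LinearIndependent K ![a.rep, v]) (hk : 1 ≤ k) (hγ : nuSum d γ = lineJet d a.rep v ℓ)
    {e j : ℕ} {l : PR K m} (hl : l.IsHomogeneous e) {q : Polynomial K}
    (hlq : lineRestrict a.rep v l = Polynomial.X ^ j * q) (hq : q.coeff 0 ≠ 0) (hj : j ≤ k) :
    d + 1 ≤ {p ∈ γ.support | eval p.rep l ≠ 0}.card + e + (k - j) := by
  by_contra! hlt
  set B := {p ∈ γ.support | eval p.rep l ≠ 0}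
  obtain ⟨t, rfl⟩ := Nat.exists_eq_add_of_le' (show e + (k - j) ≤ d by omega)
  obtain ⟨g, hg, hgB, hga⟩ := exists_form_separating (Finset.notMem_erase a B)
    (show _ ≤ t from (Finset.card_erase_le).trans (by omega))
  obtain ⟨x, hx, hxX⟩ :=
    exists_form_lineRestrict_eq h (Polynomial.natDegree_X_pow_le (R := K) (k - j))
  let f : Hd K m (t + (e + (k - j))) := ⟨g * (l * x), hg.mul (hl.mul hx)⟩
  have hf : lineRestrict a.rep v f = Polynomial.X ^ k * (q * lineRestrict a.rep v g) := by
    simp only [f, map_mul, hlq, hxX]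
    rw [← Nat.add_sub_cancel' hj, Nat.add_sub_cancel_left, pow_add]
    ring
  have hjet : lineJet (t + (e + (k - j))) a.rep v ℓ f ≠ 0 := by
    rw [lineJet_apply, hf, hℓ.apply_X_pow_mul, Polynomial.mul_coeff_zero, coeff_zero_lineRestrict]
    exact mul_ne_zero (mul_ne_zero hq hga) hℓ.apply_X_pow_ne_zero
  refine hjet ?_
  rw [← hγ, nuSum_apply]
  refine Finset.sum_eq_zero fun p hp => mul_eq_zero_of_right _ ?_
  rcases eq_or_ne p a with rfl | hpa
  · rw [← coeff_zero_lineRestrict p.rep v, hf, Polynomial.mul_coeff_zero, Polynomial.coeff_X_pow,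
      if_neg (by omega), zero_mul]
  · simp only [f, map_mul]
    rcases eq_or_ne (eval p.rep l) 0 with hpl | hpl
    · rw [hpl, zero_mul, mul_zero]
    · rw [hgB p (Finset.mem_erase.2 ⟨hpa, Finset.mem_filter.2 ⟨hp, hpl⟩⟩), zero_mul]

theorem IsJetOfOrder.le_card_support (hℓ : IsJetOfOrder k ℓ)
    (h : LinearIndependent K ![a.rep, v]) (hk : 1 ≤ k) (hγ : nuSum d γ = lineJet d a.rep v ℓ) :
    d + 1 ≤ γ.support.card + k := by
  classical
  have hle := hℓ.le_card_filter_eval_ne_zero h hk hγ (isHomogeneous_one _ _) (q := 1) (j := 0)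
    (by simp) (by simp) (Nat.zero_le k)
  have := Finset.card_filter_le γ.support fun p => eval p.rep (1 : PR K m) ≠ 0
  omega

theorem IsJetOfOrder.rep_mem_of_card_le (hℓ : IsJetOfOrder k ℓ)
    (h : LinearIndependent K ![a.rep, v]) (hk : 1 ≤ k) (hγ : nuSum d γ = lineJet d a.rep v ℓ)
    (hcard : γ.support.card + k ≤ 2 * d) :
    ∀ p ∈ γ.support, p.rep ∈ Submodule.span K {a.rep, v} := by
  classical
  set W := Submodule.span K {a.rep, v}
  obtain ⟨t, rfl⟩ := Nat.exists_eq_add_of_le' (show 1 ≤ d by omega)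
  obtain ⟨c, hc, hrel⟩ := exists_nuSum_eq_zero_support_filter γ W fun f hf => by
    rw [hγ, lineJet_apply, (lineRestrict_eq_zero_iff a.rep v f.2).2 hf, map_zero]
  suffices hc0 : c = 0 by
    intro p hp
    by_contra hpW
    have : p ∈ c.support := hc ▸ Finset.mem_filter.2 ⟨hp, hpW⟩
    simp [hc0] at this
  by_contra hne
  have hcγ : c.support ⊆ γ.support := hc ▸ Finset.filter_subset _ _
  have hlarge := add_two_le_card_of_nuSum_eq_zero hne hrel
  obtain ⟨D, hD, hcD⟩ := exists_line_of_nuSum_eq_zero hrel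
    (by have := Finset.card_le_card hcγ; omega)
  obtain ⟨w, hwW, hwD⟩ : ∃ w ∈ W, w ∉ D := by
    by_contra! hWD
    obtain ⟨p, hp⟩ := Finsupp.support_nonempty_iff.2 hne
    have hpW : p.rep ∈ W := Submodule.eq_of_le_of_finrank_le hWD
      (hD.trans_eq (finrank_span_pair_eq_two h).symm) ▸ hcD p hp
    rw [hc] at hp
    exact (Finset.mem_filter.1 hp).2 hpW
  obtain ⟨l, hl, hlD, hlw⟩ := exists_linearForm_vanishing_on D (fun _ : Unit => w) fun _ => hwD
  obtain ⟨j, q, hj, hq, hlq⟩ := exists_eq_X_pow_mul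
    fun hl0 => hlw () ((lineRestrict_eq_zero_iff a.rep v hl).1 hl0 w hwW)
  have hle := hℓ.le_card_filter_eval_ne_zero h hk hγ hl hlq hq
    ((hj.trans (natDegree_lineRestrict_le _ _ hl)).trans hk)
  have hdisj : Disjoint c.support {p ∈ γ.support | eval p.rep l ≠ 0} :=
    Finset.disjoint_left.2 fun p hp hp' => (Finset.mem_filter.1 hp').2 (hlD _ (hcD p hp))
  have hunion := Finset.card_le_card
    (Finset.union_subset hcγ (Finset.filter_subset (fun p => eval p.rep l ≠ 0) γ.support))
  rw [Finset.card_union_of_disjoint hdisj] at hunion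
  omega

theorem IsJetOfOrder.le_card_support_add (hℓ : IsJetOfOrder k ℓ)
    (h : LinearIndependent K ![a.rep, v]) (hk : 1 ≤ k) {e α : Pm K m →₀ K}
    (he : ∀ p ∈ e.support, p.rep ∉ Submodule.span K {a.rep, v}) (hd : 2 * e.support.card ≤ d)
    (hα : nuSum d α = lineJet d a.rep v ℓ + nuSum d e) :
    d + 1 + e.support.card ≤ α.support.card + k := by
  classical
  by_contra! hlt
  have hγ : nuSum d (α - e) = lineJet d a.rep v ℓ := by rw [map_sub, hα, add_sub_cancel_right]
  have hcard : (α - e).support.card ≤ α.support.card + e.support.card :=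
    (Finset.card_le_card Finsupp.support_sub).trans (Finset.card_union_le _ _)
  have hline := hℓ.rep_mem_of_card_le h hk hγ (by omega)
  have hdisj : Disjoint (α - e).support e.support :=
    Finset.disjoint_left.2 fun p hp hpe => he p hpe (hline p hp)
  have hsupp := Finsupp.support_add_eq hdisj
  rw [sub_add_cancel] at hsupp
  have := hℓ.le_card_support h hk hγ
  rw [hsupp, Finset.card_union_of_disjoint hdisj] at hlt
  omega

end LowerBound

section Deformation

open Polynomial

theorem exists_polynomial_of_mem_polyFunctions {K : Type} [Field K] {V : Type} [AddCommGroup V]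
    [Module K V] {F : V → K} (hF : F ∈ polyFunctions K V) {γ : K → V}
    (hγ : ∀ φ : Module.Dual K V, ∃ q : K[X], ∀ ε, φ (γ ε) = q.eval ε) :
    ∃ q : K[X], ∀ ε, F (γ ε) = q.eval ε := by
  induction hF using Algebra.adjoin_induction with
  | mem g hg =>
    obtain ⟨φ, rfl⟩ := hg
    exact hγ φ
  | algebraMap r => exact ⟨C r, fun ε => by simp⟩
  | add f g _ _ hf hg =>
    obtain ⟨q, hq⟩ := hf
    obtain ⟨r, hr⟩ := hg
    exact ⟨q + r, fun ε => by simp [hq, hr]⟩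
  | mul f g _ _ hf hg =>
    obtain ⟨q, hq⟩ := hf
    obtain ⟨r, hr⟩ := hg
    exact ⟨q * r, fun ε => by simp [hq, hr]⟩

theorem mem_zClosure_of_curve {K : Type} [Field K] [Infinite K] {V : Type} [AddCommGroup V]
    [Module K V] {T : Set (ℙ K V)} {P : ℙ K V} {γ : K → V} (h0 : γ 0 = P.rep)
    (hγ : ∀ φ : Module.Dual K V, ∃ q : K[X], ∀ ε, φ (γ ε) = q.eval ε)
    (hT : ∀ ε ≠ 0, ∀ h : γ ε ≠ 0, Projectivization.mk K (γ ε) h ∈ T) : P ∈ zClosure T := by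
  intro F hF hFT c
  obtain ⟨q, hq⟩ := exists_polynomial_of_mem_polyFunctions hF (γ := fun ε => c • γ ε) fun φ => by
    obtain ⟨q, hq⟩ := hγ φ
    exact ⟨C c * q, fun ε => by simp [hq]⟩
  obtain ⟨φ, hφ⟩ : ∃ φ : Module.Dual K V, φ P.rep ≠ 0 := by
    by_contra! h
    exact P.rep_nonzero ((Module.forall_dual_apply_eq_zero_iff K _).1 h)
  obtain ⟨r, hr⟩ := hγ φ
  have hzero : X * r * q = 0 := by
    refine Polynomial.funext fun ε => ?_
    simp only [eval_mul, eval_X, eval_zero, ← hr, ← hq, mul_eq_zero, or_assoc]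
    refine or_iff_not_imp_left.2 fun hε => or_iff_not_imp_left.2 fun hφε => ?_
    have hγε : γ ε ≠ 0 := fun h => hφε (by rw [h, map_zero])
    obtain ⟨x, hx⟩ := Projectivization.exists_smul_eq_mk_rep K (γ ε) hγε
    have := hFT _ (hT ε hε hγε) (c * ↑x⁻¹)
    rwa [← hx, mul_smul, ← Units.smul_def, inv_smul_smul] at this
  have hr0 : r ≠ 0 := by
    rintro rfl
    exact hφ (by rw [← h0, hr, eval_zero])
  have hq0 : q = 0 := (mul_eq_zero.1 hzero).resolve_left (mul_ne_zero X_ne_zero hr0)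
  rw [← h0, hq, hq0, eval_zero]

variable {K : Type} [Field K]

theorem exists_polynomial_eval_eq_apply_modByMonic (ℓ : Module.Dual K K[X]) {H : K[X][X]}
    (hH : H.Monic) (q : K[X]) :
    ∃ r : K[X], ∀ ε, ℓ (q %ₘ H.map (evalRingHom ε)) = r.eval ε := by
  refine ⟨∑ i ∈ Finset.range (H.natDegree + 1), C (ℓ (X ^ i)) * (q.map C %ₘ H).coeff i,
    fun ε => ?_⟩
  have hmod : (q.map C %ₘ H).map (evalRingHom ε) = q %ₘ H.map (evalRingHom ε) := by
    have hid : (evalRingHom ε).comp C = RingHom.id K := by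
      ext
      simp
    rw [map_modByMonic _ hH, map_map, hid, map_id]
  have hlt : ((q.map C %ₘ H).map (evalRingHom ε)).natDegree < H.natDegree + 1 :=
    Nat.lt_succ_iff.2 (natDegree_map_le.trans (natDegree_modByMonic_le _ hH))
  rw [← hmod, as_sum_range' _ _ hlt, map_sum, eval_finsetSum]
  refine Finset.sum_congr rfl fun i _ => ?_
  rw [← C_mul_X_pow_eq_monomial, ← smul_eq_C_mul, map_smul, coeff_map, eval_mul, eval_C,
    coe_evalRingHom, smul_eq_mul, mul_comm]

-- The jet at `0` is the limit of divided differences at the points `t ε`, for `t` in a set of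
-- `b` scalars.
theorem exists_deformation_of_apply_X_pow_mul_eq_zero [Infinite K] {b : ℕ} {ℓ : Module.Dual K K[X]}
    (hℓ : ∀ q, ℓ (X ^ b * q) = 0) :
    ∃ γ : K → Module.Dual K K[X], γ 0 = ℓ ∧ (∀ q, ∃ r : K[X], ∀ ε, γ ε q = r.eval ε) ∧
      ∀ ε ≠ 0, ∃ R : Finset K, R.card = b ∧ ∀ q, (∀ t ∈ R, q.eval t = 0) → γ ε q = 0 := by
  classical
  obtain ⟨S, hS⟩ := Infinite.exists_subset_card_eq K b
  let G (ε : K) : K[X] := ∏ t ∈ S, (X - C (t * ε))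
  have hG (ε : K) : (G ε).Monic := monic_prod_of_monic _ _ fun _ _ => monic_X_sub_C _
  refine ⟨fun ε => ℓ ∘ₗ modByMonicHom (G ε), LinearMap.ext fun q => ?_, fun q => ?_,
    fun ε hε => ⟨S.image (· * ε), ?_, fun q hq => ?_⟩⟩
  · have hG0 : G 0 = X ^ b := by simp [G, hS]
    conv_rhs => rw [← modByMonic_add_div q (G 0), map_add, hG0, hℓ, add_zero]
    rw [← hG0]
    rfl
  · let H : K[X][X] := ∏ t ∈ S, (X - C (C t * X))
    have hH : H.Monic := monic_prod_of_monic _ _ fun _ _ => monic_X_sub_C _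
    have hHG (ε : K) : H.map (evalRingHom ε) = G ε := by simp [H, G, Polynomial.map_prod]
    simp only [LinearMap.comp_apply, modByMonicHom_apply, ← hHG]
    exact exists_polynomial_eval_eq_apply_modByMonic ℓ hH q
  · rw [Finset.card_image_of_injective S (mul_left_injective₀ hε), hS]
  · have hdvd : G ε ∣ q := by
      refine Finset.prod_dvd_of_coprime (fun s _ t _ hst => ?_) fun t ht => ?_
      · exact pairwise_coprime_X_sub_C (mul_left_injective₀ hε) hst
      · exact dvd_iff_isRoot.2 (hq _ (Finset.mem_image_of_mem _ ht))
    rw [LinearMap.comp_apply, modByMonicHom_apply, (modByMonic_eq_zero_iff_dvd (hG ε)).2 hdvd,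
      map_zero]

theorem mem_secantWrt_of_rep_eq [Infinite K] {m d b : ℕ} {u v : Fin (m + 1) → K}
    (h : LinearIndependent K ![u, v]) {ℓ : Module.Dual K K[X]} (hℓ : ∀ q, ℓ (X ^ b * q) = 0)
    {E : Finset (Pm K m)} {φ : Module.Dual K (Hd K m d)} (hφ : φ ∈ dualSpan d ↑E) {P : PN K m d}
    (hP : P.rep = lineJet d u v ℓ + φ) : P ∈ secantWrt (XSet K m d) (b + E.card) := by
  classical
  have : FiniteDimensional K (Hd K m d) :=
    Module.Finite.iff_fg.2 (MvPolynomial.homogeneousSubmodule_fg (Fin (m + 1)) K d)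
  obtain ⟨γ, h0, hpoly, hR⟩ := exists_deformation_of_apply_X_pow_mul_eq_zero hℓ
  refine mem_zClosure_of_curve (γ := fun ε => lineJet d u v (γ ε) + φ) ?_ (fun Φ => ?_)
    fun ε hε hne => ?_
  · rw [h0, hP]
  · obtain ⟨f, rfl⟩ := (Module.evalEquiv K (Hd K m d)).surjective Φ
    obtain ⟨r, hr⟩ := hpoly (lineRestrict u v f)
    exact ⟨r + C (φ f), fun ε => by simp [lineJet_apply, hr]⟩
  · obtain ⟨R, hRb, hker⟩ := hR ε hε
    obtain ⟨A, hAR, -, hA⟩ :=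
      exists_finset_lineJet_mem_dualSpan (d := d) h fun q _ hq => hker q hq
    obtain ⟨S, hS, hScard, hspan⟩ := exists_finset_subset_nuSet d (A := A ∪ E) (Set.subset_univ _)
    rw [← XSet_eq_nuSet_univ] at hS
    refine ⟨S, hS, ?_, ?_⟩
    · have := Finset.card_union_le A E
      omega
    · obtain ⟨x, hx⟩ := Projectivization.exists_smul_eq_mk_rep K _ hne
      rw [hspan, ← hx, Finset.coe_union, dualSpan_union]
      exact Submodule.smul_mem _ _ (Submodule.add_mem_sup hA hφ)

end Deformation

section Catalecticant

open MvPolynomial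

variable {K : Type} [Field K] {m t t' : ℕ} {ι : Type}

theorem det_mem_polyFunctions {V : Type} [AddCommGroup V] [Module K V] [Fintype ι] [DecidableEq ι]
    (φ : ι → ι → Module.Dual K V) :
    (fun x => (Matrix.of fun i j => φ i j x).det) ∈ polyFunctions K V := by
  have hdet : (fun x => (Matrix.of fun i j => φ i j x).det) =
      ∑ σ : Equiv.Perm ι, (Equiv.Perm.sign σ : ℤ) • ∏ i, (φ (σ i) i : V → K) := by
    funext x
    simp [Matrix.det_apply, Finset.sum_apply, Finset.prod_apply, Units.smul_def]
  rw [hdet]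
  refine Subalgebra.sum_mem _ fun σ _ => zsmul_mem (Subalgebra.prod_mem _ fun i _ => ?_) _
  exact Algebra.subset_adjoin ⟨φ (σ i) i, rfl⟩

/-- The product of two forms, as a form. -/
noncomputable def mulForm (f : Hd K m t) (g : Hd K m t') : Hd K m (t + t') :=
  ⟨(f : PR K m) * g, f.2.mul g.2⟩

/-- The catalecticant of `φ`: the matrix of the bilinear form `(f, g) ↦ φ (f g)` with respect to
two families of forms. -/
noncomputable def catalecticant (φ : Module.Dual K (Hd K m (t + t'))) (f : ι → Hd K m t)
    (g : ι → Hd K m t') : Matrix ι ι K :=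
  Matrix.of fun i j => φ (mulForm (f i) (g j))

theorem catalecticant_add (φ ψ : Module.Dual K (Hd K m (t + t'))) (f : ι → Hd K m t)
    (g : ι → Hd K m t') :
    catalecticant (φ + ψ) f g = catalecticant φ f g + catalecticant ψ f g := rfl

theorem catalecticant_lineJet_apply (u v : Fin (m + 1) → K) (ℓ : Module.Dual K (Polynomial K))
    (f : ι → Hd K m t) (g : ι → Hd K m t') (i j : ι) :
    catalecticant (lineJet (t + t') u v ℓ) f g i j =
      ℓ (lineRestrict u v (f i) * lineRestrict u v (g j)) := by
  rw [← map_mul]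
  rfl

theorem catalecticant_nuSum_apply (c : Pm K m →₀ K) (f : ι → Hd K m t) (g : ι → Hd K m t')
    (i j : ι) : catalecticant (nuSum (t + t') c) f g i j =
      ∑ p ∈ c.support, c p * (eval p.rep (f i : PR K m) * eval p.rep (g j : PR K m)) := by
  simp [catalecticant, nuSum_apply, mulForm]

theorem det_catalecticant_nuSum_eq_zero [Fintype ι] [DecidableEq ι] {c : Pm K m →₀ K}
    (hc : c.support.card < Fintype.card ι) (f : ι → Hd K m t) (g : ι → Hd K m t') :
    (catalecticant (nuSum (t + t') c) f g).det = 0 := by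
  let U : Matrix ι c.support K := Matrix.of fun i p => c p * eval p.1.rep (f i : PR K m)
  let V : Matrix c.support ι K := Matrix.of fun p j => eval p.1.rep (g j : PR K m)
  have hUV : catalecticant (nuSum (t + t') c) f g = U * V := by
    ext i j
    simp only [catalecticant_nuSum_apply, Matrix.mul_apply, U, V, Matrix.of_apply, mul_assoc]
    exact (Finset.sum_coe_sort c.support fun p => c p * (eval p.rep _ * eval p.rep _)).symm
  by_contra hdet
  have hfull := Matrix.rank_of_isUnit _
    ((Matrix.isUnit_iff_isUnit_det _).2 (isUnit_iff_ne_zero.2 hdet))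
  have hle := (hUV ▸ Matrix.rank_mul_le_left U V).trans (Matrix.rank_le_card_width U)
  rw [hfull, Fintype.card_coe] at hle
  omega

theorem notMem_secantWrt_of_det_catalecticant_ne_zero [Infinite K] [Fintype ι] [DecidableEq ι]
    {P : PN K m (t + t')} {f : ι → Hd K m t} {g : ι → Hd K m t'}
    (hdet : (catalecticant P.rep f g).det ≠ 0) {r : ℕ} (hr : r < Fintype.card ι) :
    P ∉ secantWrt (XSet K m (t + t')) r := by
  intro hP
  refine hdet ?_
  have hzero := hP _
    (det_mem_polyFunctions fun i j => Module.Dual.eval K _ (mulForm (f i) (g j))) ?_ 1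
  · rwa [one_smul] at hzero
  rintro Q ⟨S, hS, hSr, hQ⟩ x
  rw [XSet_eq_nuSet_univ] at hS
  obtain ⟨A, -, hAS, hspan⟩ := exists_finset_of_subset_nuSet hS
  rw [hspan] at hQ
  obtain ⟨c, hcA, hc⟩ := mem_dualSpan_iff.1 (Submodule.smul_mem _ x hQ)
  have hcard := Finset.card_le_card (Finset.coe_subset.1 hcA)
  rw [← hc]
  exact det_catalecticant_nuSum_eq_zero (by omega) f g

variable {k : ℕ} {u v : Fin (m + 1) → K} {a : Pm K m}

theorem IsJetOfOrder.det_catalecticant_ne_zero {ℓ : Module.Dual K (Polynomial K)}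
    (hℓ : IsJetOfOrder k ℓ) {f : Fin (k + 1) → Hd K m t} {g : Fin (k + 1) → Hd K m t'}
    {q r : Polynomial K} (hq : q.coeff 0 ≠ 0) (hr : r.coeff 0 ≠ 0)
    (hf : ∀ i, lineRestrict u v (f i) = Polynomial.X ^ (i : ℕ) * q)
    (hg : ∀ j, lineRestrict u v (g j) = Polynomial.X ^ (k - j) * r) :
    (catalecticant (lineJet (t + t') u v ℓ) f g).det ≠ 0 := by
  have hentry (i j : Fin (k + 1)) : catalecticant (lineJet (t + t') u v ℓ) f g i j =
      ℓ (Polynomial.X ^ ((i : ℕ) + (k - j)) * (q * r)) := by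
    rw [catalecticant_lineJet_apply, hf, hg, pow_add]
    ring_nf
  rw [Matrix.det_of_isUpperTriangular]
  · refine Finset.prod_ne_zero_iff.2 fun i _ => ?_
    rw [hentry, Nat.add_sub_cancel' (Nat.lt_succ_iff.1 i.2), hℓ.apply_X_pow_mul,
      Polynomial.mul_coeff_zero]
    exact mul_ne_zero (mul_ne_zero hq hr) hℓ.apply_X_pow_ne_zero
  · intro i j hij
    replace hij : (j : ℕ) < i := hij
    rw [hentry, show (i : ℕ) + (k - j) = k + 1 + (i - j - 1) by omega, pow_add, mul_assoc,
      hℓ.apply_X_pow_succ_mul]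

theorem exists_forms_vanishing_lineRestrict_eq [Infinite K]
    (h : LinearIndependent K ![a.rep, v]) {E : Finset (Pm K m)} (ha : a ∉ E) (ht : E.card + k ≤ t) :
    ∃ (f : Fin (k + 1) → Hd K m t) (q : Polynomial K), q.coeff 0 ≠ 0 ∧
      (∀ i, ∀ p ∈ E, eval p.rep (f i : PR K m) = 0) ∧
      ∀ i, lineRestrict a.rep v (f i) = Polynomial.X ^ (i : ℕ) * q := by
  obtain ⟨g, hg, hgE, hga⟩ := exists_form_separating ha (show E.card ≤ t - k by omega)
  choose x hx hxX using fun i : Fin (k + 1) => exists_form_lineRestrict_eq h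
    ((Polynomial.natDegree_X_pow_le (R := K) (i : ℕ)).trans (Nat.lt_succ_iff.1 i.2))
  refine ⟨fun i => ⟨x i * g, Nat.add_sub_cancel' (show k ≤ t by omega) ▸ (hx i).mul hg⟩,
    lineRestrict a.rep v g, ?_, fun i p hp => ?_, fun i => ?_⟩
  · rwa [coeff_zero_lineRestrict]
  · rw [map_mul, hgE p hp, mul_zero]
  · rw [map_mul, hxX]

theorem exists_forms_vanishing_eval_ne_zero_iff [Infinite K]
    {W : Submodule K (Fin (m + 1) → K)} {E : Finset (Pm K m)} (hE : ∀ p ∈ E, p.rep ∉ W)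
    (ht : E.card ≤ t) :
    ∃ f : E → Hd K m t, (∀ p, ∀ w ∈ W, eval w (f p : PR K m) = 0) ∧
      ∀ p q : E, eval q.1.rep (f p : PR K m) ≠ 0 ↔ p = q := by
  classical
  obtain ⟨l, hl, hlW, hlE⟩ := exists_linearForm_vanishing_on W (fun p : E => p.1.rep)
    fun p => hE p p.2
  have hcard (p : E) : (E.erase p).card + 1 ≤ t := by rwa [Finset.card_erase_add_one p.2]
  choose g hg hgE hgp using fun p : E =>
    exists_form_separating (Finset.notMem_erase p.1 E) (Nat.le_sub_of_add_le (hcard p))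
  refine ⟨fun p => ⟨g p * l, ?_⟩, fun p w hw => ?_, fun p q => ⟨fun hq => ?_, ?_⟩⟩
  · exact Nat.sub_add_cancel (le_of_add_le_right (hcard p)) ▸ (hg p).mul hl
  · rw [map_mul, hlW w hw, mul_zero]
  · by_contra hpq
    rw [map_mul, hgE p q (Finset.mem_erase.2 ⟨fun h => hpq (Subtype.ext h.symm), q.2⟩),
      zero_mul] at hq
    exact hq rfl
  · rintro rfl
    rw [map_mul]
    exact mul_ne_zero (hgp p) (hlE p)

theorem catalecticant_lineJet_sumElim {κ : Type} {ℓ : Module.Dual K (Polynomial K)}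
    (f : ι → Hd K m t) (g : ι → Hd K m t') {F : κ → Hd K m t} {G : κ → Hd K m t'}
    (hF : ∀ i, lineRestrict u v (F i) = 0) (hG : ∀ j, lineRestrict u v (G j) = 0) :
    catalecticant (lineJet (t + t') u v ℓ) (Sum.elim f F) (Sum.elim g G) =
      Matrix.fromBlocks (catalecticant (lineJet (t + t') u v ℓ) f g) 0 0 0 := by
  ext (i | i) (j | j)
  · rfl
  all_goals simp [catalecticant_lineJet_apply, hF, hG]

theorem catalecticant_nuSum_sumElim [DecidableEq (Pm K m)] {e : Pm K m →₀ K}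
    {f : ι → Hd K m t} {g : ι → Hd K m t'} {F : e.support → Hd K m t} {G : e.support → Hd K m t'}
    (hf : ∀ i, ∀ p ∈ e.support, eval p.rep (f i : PR K m) = 0)
    (hg : ∀ j, ∀ p ∈ e.support, eval p.rep (g j : PR K m) = 0)
    (hF : ∀ p q : e.support, eval q.1.rep (F p : PR K m) ≠ 0 ↔ p = q)
    (hG : ∀ p q : e.support, eval q.1.rep (G p : PR K m) ≠ 0 ↔ p = q) :
    catalecticant (nuSum (t + t') e) (Sum.elim f F) (Sum.elim g G) =
      Matrix.fromBlocks 0 0 0 (Matrix.diagonal fun p : e.support =>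
        e p * (eval p.1.rep (F p : PR K m) * eval p.1.rep (G p : PR K m))) := by
  replace hF (p q : e.support) (h : p ≠ q) := not_not.1 (mt (hF p q).1 h)
  replace hG (p q : e.support) (h : p ≠ q) := not_not.1 (mt (hG p q).1 h)
  ext (i | p) (j | q) <;> rw [catalecticant_nuSum_apply]
  · exact Finset.sum_eq_zero fun p hp => by simp [hf i p hp]
  · exact Finset.sum_eq_zero fun p hp => by simp [hf i p hp]
  · exact Finset.sum_eq_zero fun p hp => by simp [hg j p hp]
  · rw [Finset.sum_eq_single_of_mem p.1 p.2 fun r hr hrp => ?_]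
    · rcases eq_or_ne p q with rfl | hpq
      · simp
      · simp [hG q p hpq.symm, hpq]
    · simp [hF p ⟨r, hr⟩ fun h => hrp (congrArg Subtype.val h).symm]

end Catalecticant

section BorderRank

open MvPolynomial

variable {K : Type} [Field K] [Infinite K] {m d k : ℕ} {a : Pm K m} {v : Fin (m + 1) → K}
  {ℓ : Module.Dual K (Polynomial K)} {e : Pm K m →₀ K}

open scoped Classical in
theorem IsJetOfOrder.exists_det_catalecticant_ne_zero {t t' : ℕ} (hℓ : IsJetOfOrder k ℓ)
    (h : LinearIndependent K ![a.rep, v])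
    (he : ∀ p ∈ e.support, p.rep ∉ Submodule.span K {a.rep, v})
    (ht : e.support.card + k ≤ t) (ht' : e.support.card + k ≤ t') :
    ∃ (f : Fin (k + 1) ⊕ e.support → Hd K m t) (g : Fin (k + 1) ⊕ e.support → Hd K m t'),
      (catalecticant (lineJet (t + t') a.rep v ℓ + nuSum (t + t') e) f g).det ≠ 0 := by
  have ha : a ∉ e.support := fun ha => he a ha (Submodule.subset_span (Set.mem_insert _ _))
  obtain ⟨f, q, hq, hfE, hf⟩ := exists_forms_vanishing_lineRestrict_eq h ha ht
  obtain ⟨g, r, hr, hgE, hg⟩ := exists_forms_vanishing_lineRestrict_eq h ha ht'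
  obtain ⟨F, hFW, hF⟩ :=
    exists_forms_vanishing_eval_ne_zero_iff he (le_of_add_le_left ht)
  obtain ⟨G, hGW, hG⟩ :=
    exists_forms_vanishing_eval_ne_zero_iff he (le_of_add_le_left ht')
  have hF0 (p) := (lineRestrict_eq_zero_iff a.rep v (F p).2).2 (hFW p)
  have hG0 (p) := (lineRestrict_eq_zero_iff a.rep v (G p).2).2 (hGW p)
  refine ⟨Sum.elim f F, Sum.elim (fun j => g j.rev) G, ?_⟩
  rw [catalecticant_add, catalecticant_lineJet_sumElim _ _ hF0 hG0,
    catalecticant_nuSum_sumElim hfE (fun j => hgE j.rev) hF hG, Matrix.fromBlocks_add,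
    add_zero, add_zero, add_zero, zero_add, Matrix.det_fromBlocks_zero₂₁, Matrix.det_diagonal]
  refine mul_ne_zero (hℓ.det_catalecticant_ne_zero hq hr hf fun j => ?_)
    (Finset.prod_ne_zero_iff.2 fun p _ => ?_)
  · rw [hg, Fin.val_rev, Nat.succ_sub_succ]
  · exact mul_ne_zero (Finsupp.mem_support_iff.1 p.2)
      (mul_ne_zero ((hF p p).2 rfl) ((hG p p).2 rfl))

theorem IsJetOfOrder.brank_eq (hℓ : IsJetOfOrder k ℓ)
    (h : LinearIndependent K ![a.rep, v])
    (he : ∀ p ∈ e.support, p.rep ∉ Submodule.span K {a.rep, v})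
    (hd : 2 * (e.support.card + k) ≤ d) {P : PN K m d}
    (hP : P.rep = lineJet d a.rep v ℓ + nuSum d e) : brank d P = k + 1 + e.support.card := by
  classical
  have hmem : P ∈ secantWrt (XSet K m d) (k + 1 + e.support.card) :=
    mem_secantWrt_of_rep_eq h hℓ.apply_X_pow_succ_mul (nuSum_mem_dualSpan d e) hP
  refine le_antisymm (Nat.sInf_le ⟨by omega, hmem⟩)
    (le_csInf ⟨_, by omega, hmem⟩ fun r hr => ?_)
  by_contra! hlt
  obtain ⟨t', rfl⟩ := Nat.exists_eq_add_of_le (show e.support.card + k ≤ d by omega)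
  obtain ⟨f, g, hdet⟩ := hℓ.exists_det_catalecticant_ne_zero h he le_rfl (t' := t') (by omega)
  rw [← hP] at hdet
  exact notMem_secantWrt_of_det_catalecticant_ne_zero hdet (by simpa using hlt) hr.2

end BorderRank

section NormalForm

open MvPolynomial

variable {K : Type} [Field K] [Infinite K] {m d k : ℕ} {a : Pm K m} {v : Fin (m + 1) → K}
  {E : Finset (Pm K m)}

theorem jetIdeal_succ_inf_idealOfSet_lt (h : LinearIndependent K ![a.rep, v]) (ha : a ∉ E)
    (k : ℕ) : jetIdeal a.rep v (k + 1) ⊓ idealOfSet ↑E < jetIdeal a.rep v k ⊓ idealOfSet ↑E := by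
  obtain ⟨f, q, hq, hfE, hf⟩ := exists_forms_vanishing_lineRestrict_eq h ha (le_refl (E.card + k))
  specialize hfE (Fin.last k)
  specialize hf (Fin.last k)
  rw [Fin.val_last] at hf
  refine (inf_le_inf_right _ (jetIdeal_le_jetIdeal k.le_succ)).lt_of_not_ge fun hle => ?_
  have hmem := hle ⟨(mem_jetIdeal_iff (f _).2).2 (hf ▸ dvd_mul_right _ q),
    (mem_idealOfSet_iff (f _).2).2 hfE⟩
  have hdvd := (mem_jetIdeal_iff (f _).2).1 hmem.1
  rw [hf, pow_succ, mul_dvd_mul_iff_left (pow_ne_zero k Polynomial.X_ne_zero)] at hdvd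
  exact hq (Polynomial.X_dvd_iff.1 hdvd)

open scoped Classical in
theorem jetIdeal_inf_idealOfSet_lt_erase (hE : ∀ p ∈ E, p.rep ∉ Submodule.span K {a.rep, v})
    (k : ℕ) {p : Pm K m} (hp : p ∈ E) :
    jetIdeal a.rep v k ⊓ idealOfSet ↑E < jetIdeal a.rep v k ⊓ idealOfSet ↑(E.erase p) := by
  obtain ⟨f, hfW, hf⟩ := exists_forms_vanishing_eval_ne_zero_iff hE le_rfl
  have hjet : (f ⟨p, hp⟩ : PR K m) ∈ jetIdeal a.rep v k := by
    rw [mem_jetIdeal_iff (f _).2, (lineRestrict_eq_zero_iff a.rep v (f _).2).2 (hfW ⟨p, hp⟩)]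
    exact dvd_zero _
  have herase : (f ⟨p, hp⟩ : PR K m) ∈ idealOfSet (↑(E.erase p) : Set (Pm K m)) := by
    refine (mem_idealOfSet_iff (f _).2).2 fun q hq => ?_
    obtain ⟨hqp, hqE⟩ := Finset.mem_erase.1 (Finset.mem_coe.1 hq)
    by_contra hne
    exact hqp (congrArg Subtype.val ((hf ⟨p, hp⟩ ⟨q, hqE⟩).1 hne)).symm
  refine (inf_le_inf_left _ (idealOfSet_anti
    (Finset.coe_subset.2 (Finset.erase_subset p E)))).lt_of_not_ge fun hle => ?_
  exact (hf ⟨p, hp⟩ ⟨p, hp⟩).2 rfl ((mem_idealOfSet_iff (f _).2).1 (hle ⟨hjet, herase⟩).2 p hp)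

theorem exists_rep_eq_lineJet_add_nuSum (h : LinearIndependent K ![a.rep, v])
    (hE : ∀ p ∈ E, p.rep ∉ Submodule.span K {a.rep, v}) {P : PN K m d}
    (hP : inSpanI (jetIdeal a.rep v (k + 1) ⊓ idealOfSet ↑E) d P)
    (hmin : ∀ F : PSub K m, jetIdeal a.rep v (k + 1) ⊓ idealOfSet ↑E < F.I → ¬ inSpanI F.I d P) :
    ∃ (ℓ : Module.Dual K (Polynomial K)) (e : Pm K m →₀ K), IsJetOfOrder k ℓ ∧ e.support = E ∧
      P.rep = lineJet d a.rep v ℓ + nuSum d e := by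
  classical
  have hspan (j : ℕ) (S : Set (Pm K m)) : schemeSpanSub (jetIdeal a.rep v j ⊓ idealOfSet S) d =
      schemeSpanSub (jetIdeal a.rep v j) d ⊔ dualSpan d S := by
    rw [schemeSpanSub_inf, schemeSpanSub_idealOfSet]
  have hmin' (j : ℕ) (S : Set (Pm K m)) (hlt : jetIdeal a.rep v (k + 1) ⊓ idealOfSet ↑E <
      jetIdeal a.rep v j ⊓ idealOfSet S) :
      P.rep ∉ schemeSpanSub (jetIdeal a.rep v j) d ⊔ dualSpan d S := by
    rw [← hspan]
    exact hmin ⟨_, (isHomogI_jetIdeal a.rep v j).inf (isHomogI_idealOfSet S),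
      (isSatI_jetIdeal a.rep_nonzero v j).inf (isSatI_idealOfSet S)⟩ hlt
  rw [inSpanI, hspan] at hP
  obtain ⟨φ, hφ, ψ, hψ, hPφψ⟩ := Submodule.mem_sup.1 hP
  obtain ⟨ℓ, hℓ, rfl⟩ := mem_schemeSpanSub_jetIdeal_iff.1 hφ
  obtain ⟨e, heE, rfl⟩ := mem_dualSpan_iff.1 hψ
  refine ⟨ℓ, e, ⟨hℓ, fun h0 => ?_⟩, (Finset.coe_subset.1 heE).antisymm fun p hp => ?_, hPφψ.symm⟩
  · have ha : a ∉ E := fun ha => hE a ha (Submodule.subset_span (Set.mem_insert _ _))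
    refine hmin' k E (jetIdeal_succ_inf_idealOfSet_lt h ha k) ?_
    rw [← hPφψ]
    refine Submodule.add_mem_sup (mem_schemeSpanSub_jetIdeal_iff.2 ⟨ℓ, fun q => ?_, rfl⟩) hψ
    rw [apply_X_pow_mul_of_forall_apply_X_pow_succ_mul hℓ, h0, mul_zero]
  · by_contra hpe
    refine hmin' (k + 1) ↑(E.erase p) (jetIdeal_inf_idealOfSet_lt_erase hE (k + 1) hp) ?_
    rw [← hPφψ]
    refine Submodule.add_mem_sup hφ (mem_dualSpan_iff.2 ⟨e, ?_, rfl⟩)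
    rw [Finset.coe_subset, Finset.subset_erase]
    exact ⟨Finset.coe_subset.1 heE, hpe⟩

end NormalForm

section SymmetricRank

variable {K : Type} [Field K] {m d k : ℕ} {a : Pm K m} {v : Fin (m + 1) → K}
  {ℓ : Module.Dual K (Polynomial K)} {e : Pm K m →₀ K} {P : PN K m d}

theorem inSpanSet_union [DecidableEq (Pm K m)] (hP : P.rep = lineJet d a.rep v ℓ + nuSum d e)
    {A : Finset (Pm K m)} (hA : lineJet d a.rep v ℓ ∈ dualSpan d ↑A) :
    inSpanSet d ↑(A ∪ e.support) P := by
  rw [inSpanSet, hP, Finset.coe_union, dualSpan_union]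
  exact Submodule.add_mem_sup hA (nuSum_mem_dualSpan d e)

theorem IsJetOfOrder.srank_eq [IsAlgClosed K] (hℓ : IsJetOfOrder k ℓ)
    (h : LinearIndependent K ![a.rep, v]) (hk : 1 ≤ k)
    (he : ∀ p ∈ e.support, p.rep ∉ Submodule.span K {a.rep, v}) (hkd : 2 * k + 1 ≤ d)
    (hed : 2 * e.support.card ≤ d) (hP : P.rep = lineJet d a.rep v ℓ + nuSum d e) :
    srank d P + k = d + 1 + e.support.card := by
  classical
  have : Infinite K := IsAlgClosed.instInfinite
  obtain ⟨A, hAcard, -, hA⟩ := hℓ.exists_finset_lineJet_mem_dualSpan h hkd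
  have hAP := inSpanSet_union hP hA
  have hupper := srank_le_card hAP
  obtain ⟨B, -, hB, hPB⟩ := exists_finset_card_eq_rankWrt (Y := Set.univ)
    (Submodule.span_mono (Set.image_mono (Set.subset_univ _)) hAP)
  obtain ⟨α, hαB, hα⟩ := mem_dualSpan_iff.1 hPB
  have hlower := hℓ.le_card_support_add h hk he hed (hα.trans hP)
  have hαcard := Finset.card_le_card (Finset.coe_subset.1 hαB)
  have hunion := Finset.card_union_le A e.support
  rw [← XSet_eq_nuSet_univ] at hB
  change B.card = srank d P at hB
  omega

theorem exists_rep_eq_smul_lineJet [Infinite K]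
    (he : ∀ p ∈ e.support, p.rep ∉ Submodule.span K {a.rep, v}) (hd : e.support.card ≤ d)
    (hP : P.rep = lineJet d a.rep v ℓ + nuSum d e) {Q : PN K m d}
    (hQ : Q.rep ∈ Submodule.span K
      (insert P.rep ((fun p : Pm K m => nu d p.rep) '' (↑e.support : Set (Pm K m)))))
    (hQW : Q.rep ∈ dualSpan d {p | p.rep ∈ Submodule.span K {a.rep, v}}) :
    ∃ x : K, x ≠ 0 ∧ Q.rep = x • lineJet d a.rep v ℓ := by
  classical
  obtain ⟨x, z, hz, hQz⟩ := Submodule.mem_span_insert.1 hQ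
  obtain ⟨β, hβ, rfl⟩ := mem_dualSpan_iff.1 hz
  set δ := x • e + β
  have hQδ : Q.rep = x • lineJet d a.rep v ℓ + nuSum d δ := by
    rw [hQz, hP, map_add, map_smul, smul_add, add_assoc]
  have hδe : δ.support ⊆ e.support := Finsupp.support_add.trans
    (Finset.union_subset Finsupp.support_smul (Finset.coe_subset.1 hβ))
  have hδ : δ = 0 := by
    by_contra hne
    have hpos := Finset.card_pos.2 (Finsupp.support_nonempty_iff.2 hne)
    have hcard := Finset.card_le_card hδe
    obtain ⟨t, rfl⟩ := Nat.exists_eq_add_of_le' (show 1 ≤ d by omega)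
    obtain ⟨c, hc, hrel⟩ := exists_nuSum_eq_zero_support_filter δ
      (Submodule.span K {a.rep, v}) fun f hf => by
        have hℓf : lineJet (t + 1) a.rep v ℓ f = 0 := by
          rw [lineJet_apply, (lineRestrict_eq_zero_iff a.rep v f.2).2 hf, map_zero]
        rw [← schemeSpanSub_idealOfSet] at hQW
        have hQf := hQW f ((mem_idealOfSet_iff f.2).2 fun p hp => hf _ hp)
        rwa [hQδ, LinearMap.add_apply, LinearMap.smul_apply, hℓf, smul_zero, zero_add] at hQf
    rw [Finset.filter_true_of_mem fun p hp => he p (hδe hp)] at hc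
    have := add_two_le_card_of_nuSum_eq_zero (fun h0 => ?_) hrel
    · rw [hc] at this
      omega
    · rw [h0, Finsupp.support_zero, eq_comm, Finsupp.support_eq_empty] at hc
      exact hne hc
  rw [hδ, map_zero, add_zero] at hQδ
  refine ⟨x, ?_, hQδ⟩
  rintro rfl
  exact Q.rep_nonzero (by rw [hQδ, zero_smul])

end SymmetricRank

open scoped Classical in
theorem stmt19_general (K : Type) [Field K] [IsAlgClosed K] (m d b : ℕ) (hb : 2 ≤ b)
    (L : Set (Pm K m)) (hL : IsLine L)
    (Z' : PSub K m) (hZL : idealOfSet L ≤ Z'.I)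
    (hZconn : ∃ a : Pm K m, pzeroLocus Z'.I = {a}) (hZdeg : idealDeg Z'.I = b)
    (E : Finset (Pm K m)) (hEL : ∀ a ∈ E, a ∉ L) (hd : 2 * (E.card + b) ≤ d + 1)
    (O : PN K m d)
    (hO : inSpanI (Z'.I ⊓ idealOfSet (↑E : Set (Pm K m))) d O)
    (hOmin : ∀ F : PSub K m, Z'.I ⊓ idealOfSet (↑E : Set (Pm K m)) < F.I →
      ¬ inSpanI F.I d O) :
    brank d O = E.card + b ∧ srank d O + b = d + 2 + E.card ∧
    ∀ Q : PN K m d,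
      (Q.rep ∈ Submodule.span K (insert O.rep ((fun a => nu d a.rep) '' (↑E : Set (Pm K m)))) ∧
        inSpanSet d L Q) →
      ∀ A' : Finset (Pm K m),
        rankWrt (nuSet d L) Q = A'.card → inSpanSet d (↑A' : Set (Pm K m)) Q →
        srank d O = (A' ∪ E).card ∧ inSpanSet d (↑(A' ∪ E) : Set (Pm K m)) O := by
  have : Infinite K := IsAlgClosed.instInfinite
  obtain ⟨W, hW, rfl⟩ := hL
  obtain ⟨a, ha⟩ := hZconn
  obtain ⟨v, hv, rfl, hZ⟩ := Z'.exists_eq_jetIdeal hW hZL ha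
  obtain ⟨k, rfl⟩ := Nat.exists_eq_add_of_le' (show 1 ≤ b by omega)
  rw [hZ, hZdeg] at hO hOmin
  have hL : {p : Pm K m | p.submodule ≤ Submodule.span K {a.rep, v}} =
      {p | p.rep ∈ Submodule.span K {a.rep, v}} := Set.ext fun _ => rep_mem_iff_submodule_le.symm
  rw [hL] at hEL ⊢
  obtain ⟨ℓ, e, hℓ, rfl, hOe⟩ := exists_rep_eq_lineJet_add_nuSum hv hEL hO hOmin
  have hrank := hℓ.srank_eq hv (by omega) hEL (by omega) (by omega) hOe
  refine ⟨?_, by omega, fun Q hQ A' hA'card hA' => ?_⟩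
  · rw [hℓ.brank_eq hv hEL (by omega) hOe, add_comm]
  obtain ⟨x, hx, hQx⟩ := exists_rep_eq_smul_lineJet hEL (by omega) hOe hQ.1 hQ.2
  have hmem : inSpanSet d ↑(A' ∪ e.support) O := inSpanSet_union hOe
    ((Submodule.smul_mem_iff _ hx).1 (hQx ▸ hA'))
  refine ⟨?_, hmem⟩
  obtain ⟨A, hAcard, hAW, hA⟩ := hℓ.exists_finset_lineJet_mem_dualSpan (d := d) hv (by omega)
  have hA'A : A'.card ≤ A.card :=
    hA'card ▸ rankWrt_nuSet_le hAW (hQx ▸ Submodule.smul_mem _ x hA : Q.rep ∈ dualSpan d ↑A)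
  have hle := srank_le_card hmem
  have hunion := Finset.card_union_le A' e.support
  omega

open scoped Classical in
/-- Step (a), Claims 1 and 2, of the proof of the main theorem: for a connected degree-`b`
subscheme `Z'` of a line `L` and a finite set `E ⊂ ℙ^m ∖ L` with `#E = s - b`, any point
`O ∈ ⟨ν_d(Z' ∪ E)⟩` lying in the span of no proper subscheme has `br(O) = s` and
`sr(O) = (d+2-b) + (s-b)`; moreover if `A' ⊂ L` evinces the rank, with respect to the
rational normal curve `ν_d(L)`, of the point `Q = ⟨{O} ∪ ν_d(E)⟩ ∩ ⟨ν_d(L)⟩`, then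
`A' ∪ E` evinces `sr(O)`. -/
theorem stmt19 (K : Type) [Field K] [IsAlgClosed K] [CharZero K]
    (m s d b : ℕ) (hm : 2 ≤ m) (hs : 4 ≤ s) (hd : 2 * s + 2 ≤ d)
    (hb2 : 2 ≤ b) (hbs : b ≤ s)
    (L : Set (Pm K m)) (hL : IsLine L)
    (Z' : PSub K m) (hZL : idealOfSet L ≤ Z'.I) (hZz : IsZeroDimI Z'.I)
    (hZconn : ∃ a : Pm K m, pzeroLocus Z'.I = {a}) (hZdeg : idealDeg Z'.I = b)
    (E : Finset (Pm K m)) (hEL : ∀ a ∈ E, a ∉ L) (hEcard : E.card + b = s)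
    (O : PN K m d)
    (hO : inSpanI (Z'.I ⊓ idealOfSet (↑E : Set (Pm K m))) d O)
    (hOmin : ∀ F : PSub K m, Z'.I ⊓ idealOfSet (↑E : Set (Pm K m)) < F.I →
      ¬ inSpanI F.I d O) :
    brank d O = s ∧ srank d O + 2 * b = d + 2 + s ∧
    ∀ Q : PN K m d,
      (Q.rep ∈ Submodule.span K (insert O.rep ((fun a => nu d a.rep) '' (↑E : Set (Pm K m)))) ∧
        inSpanSet d L Q) →
      ∀ A' : Finset (Pm K m), (↑A' : Set (Pm K m)) ⊆ L →
        rankWrt (nuSet d L) Q = A'.card → inSpanSet d (↑A' : Set (Pm K m)) Q →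
        srank d O = (A' ∪ E).card ∧ inSpanSet d (↑(A' ∪ E) : Set (Pm K m)) O := by
  obtain ⟨hbrank, hsrank, hevince⟩ := stmt19_general K m d b hb2 L hL Z' hZL hZconn hZdeg E hEL
    (by omega) O hO hOmin
  exact ⟨by omega, by omega, fun Q hQ A' _ => hevince Q hQ A'⟩
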